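/- For fixed ρ > 0, liminf_{n→∞} ( n^{1/2} D_S ) ≥ (8 π g_S(ρ))^{−1/2}. -/

import Mathlib

open MeasureTheory ProbabilityTheory Filter Set Metric
open scoped ENNReal NNReal BigOperators Topology Classical

noncomputable section

/-- Side length `n^(1/d)` of the cube `C_n` of volume `n` in dimension `d`. -/
def sideLen (d n : ℕ) : ℝ := (n : ℝ) ^ ((d : ℝ)⁻¹)

/-- The cube `C_n = [0, L)^d`. -/
def box (d : ℕ) (L : ℝ) : Set (Fin d → ℝ) := Set.univ.pi fun _ => Set.Ico (0 : ℝ) L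

/-- The Euclidean toroidal distance on the cube `[0, L)^d`. -/
def torDist {d : ℕ} (L : ℝ) (x y : Fin d → ℝ) : ℝ :=
  Real.sqrt (∑ i, (⨅ k : ℤ, |x i - y i - k * L|) ^ 2)

/-- The toroidal ball `B_r(x) = {y ∈ C_n : D(x,y) ≤ r}`. -/
def torBall {d : ℕ} (L : ℝ) (x : Fin d → ℝ) (r : ℝ) : Set (Fin d → ℝ) :=
  {y ∈ box d L | torDist L x y ≤ r}

/-- Addition (translation) in the torus `[0, L)^d`. -/
def torAdd {d : ℕ} (L : ℝ) (y x : Fin d → ℝ) : Fin d → ℝ :=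
  fun i => L * Int.fract ((y i + x i) / L)

/-- The uniform probability measure on the cube `[0, L)^d`. -/
def uniformBox (d : ℕ) (L : ℝ) : Measure (Fin d → ℝ) :=
  ((L.toNNReal ^ d)⁻¹ : ℝ≥0) • volume.restrict (box d L)

/-- The joint law of `n` independent points uniformly distributed on the cube `C_n`
of volume `n`; a point configuration is `ω : Fin n → (Fin d → ℝ)`, with `U_i = ω i`. -/
def binppLaw (d n : ℕ) : Measure (Fin n → Fin d → ℝ) :=
  Measure.pi fun _ => uniformBox d (sideLen d n)

/-- The total covered volume `V` of the union of toroidal balls of radius `ρ`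
centered at the `n` points. -/
def coveredVol (d n : ℕ) (ρ : ℝ) (ω : Fin n → Fin d → ℝ) : ℝ :=
  (volume (⋃ i, torBall (sideLen d n) (ω i) ρ)).toReal

/-- The number `S` of isolated points: indices `i` with `𝒰_n ∩ B_ρ(U_i) = {U_i}`. -/
def isolCount (d n : ℕ) (ρ : ℝ) (ω : Fin n → Fin d → ℝ) : ℝ :=
  ∑ i, if Set.range ω ∩ torBall (sideLen d n) (ω i) ρ = {ω i} then 1 else 0

/-- `π_d`: the volume of the unit ball in `ℝ^d`. -/
def unitBallVol (d : ℕ) : ℝ :=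
  (volume (Metric.closedBall (0 : EuclideanSpace ℝ (Fin d)) 1)).toReal

/-- `φ = π_d ρ^d`. -/
def phi (d : ℕ) (ρ : ℝ) : ℝ := unitBallVol d * ρ ^ d

/-- The standard normal cumulative distribution function. -/
def stdGaussCDF (t : ℝ) : ℝ := (gaussianReal 0 1 (Set.Iic t)).toReal

/-- The Kolmogorov distance `D_X` between the law of the standardized version of `X`
and the standard normal. -/
def kolDist {Ω : Type*} [MeasurableSpace Ω] (P : Measure Ω) (X : Ω → ℝ) : ℝ :=
  ⨆ t : ℝ,
    |(P {ω | (X ω - ∫ x, X x ∂P) / Real.sqrt (variance X P) ≤ t}).toReal - stdGaussCDF t|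

/-- A fixed unit vector in `ℝ^d` (junk value `0` if `d = 0`). -/
def unitVec (d : ℕ) : EuclideanSpace ℝ (Fin d) :=
  if h : 0 < d then EuclideanSpace.single (⟨0, h⟩ : Fin d) 1 else 0

/-- `ω_d(r)`: the volume of the union of two unit balls in `ℝ^d` whose centers are
at distance `r` apart. -/
def omegaVol (d : ℕ) (r : ℝ) : ℝ :=
  (volume (Metric.closedBall (0 : EuclideanSpace ℝ (Fin d)) 1 ∪
      Metric.closedBall (r • unitVec d) 1)).toReal

/-- The integral `J_{r,d}(ρ) = d π_d ∫_0^r exp(-ρ^d ω_d(t)) t^{d-1} dt`. -/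
def Jint (r : ℝ) (d : ℕ) (ρ : ℝ) : ℝ :=
  d * unitBallVol d * ∫ t in (0:ℝ)..r, Real.exp (-(ρ ^ d * omegaVol d t)) * t ^ (d - 1)

/-- The limiting variance density `g_V(ρ)`. -/
def gV (d : ℕ) (ρ : ℝ) : ℝ :=
  ρ ^ d * Jint 2 d ρ - (2 ^ d * phi d ρ + phi d ρ ^ 2) * Real.exp (-(2 * phi d ρ))

/-- The limiting variance density `g_S(ρ)`. -/
def gS (d : ℕ) (ρ : ℝ) : ℝ :=
  Real.exp (-phi d ρ) - (1 + (2 ^ d - 2) * phi d ρ + phi d ρ ^ 2) * Real.exp (-(2 * phi d ρ))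
    + ρ ^ d * (Jint 2 d ρ - Jint 1 d ρ)

/-- `κ_d`: the maximum number of closed unit balls in `ℝ^d` that can be packed so that
they all intersect a closed unit ball at the origin but are pairwise disjoint. -/
def kappa (d : ℕ) : ℕ :=
  sSup {k : ℕ | ∃ c : Fin k → EuclideanSpace ℝ (Fin d),
    (∀ i, (Metric.closedBall (c i) 1 ∩ Metric.closedBall 0 1).Nonempty) ∧
    Pairwise fun i j => Disjoint (Metric.closedBall (c i) 1) (Metric.closedBall (c j) 1)}

/-- `η_V(n, ρ)`. -/
def etaV (d n : ℕ) (ρ : ℝ) : ℝ :=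
  2 * phi d ρ ^ 2 * ((3 ^ d + 1) * phi d ρ + 1) ^ 2 *
      (1 + (2 ^ d + 1) * 6 ^ d * phi d ρ +
        ((2 * n - 6 ^ d * phi d ρ) / (n - 6 ^ d * phi d ρ)) * 6 ^ (2 * d) * phi d ρ ^ 2) +
    2 * phi d ρ ^ 4 *
      (3 * (4 ^ d + 2 ^ d) * phi d ρ +
        3 * 4 ^ d * phi d ρ ^ 2 * ((2 * n - 3 * 2 ^ d * phi d ρ) / (n - 3 * 2 ^ d * phi d ρ)) +
        4 + 2 / n)

/-- `η_S(n, ρ)`. -/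
def etaS (d n : ℕ) (ρ : ℝ) : ℝ :=
  2 * (1 + 2 * (kappa d : ℝ)) ^ 2 *
      (1 + (2 ^ d + 1) * 3 ^ d * phi d ρ +
        ((2 * n - 3 ^ d * phi d ρ) / (n - 3 ^ d * phi d ρ)) * 9 ^ d * phi d ρ ^ 2) +
    (((1 : ℝ) + kappa d) ^ 2 / 2) *
      ((2 ^ d + 2 * 3 ^ d + 3) * phi d ρ +
        (2 ^ (d + 1) + 1) *
          ((2 * n - (2 ^ (d + 1) + 1) * phi d ρ) / (n - (2 ^ (d + 1) + 1) * phi d ρ)) *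
          phi d ρ ^ 2 +
        (4 * n - 2) / (n - 1))

/-!
`S` is integer valued, so the distribution function of the standardized `S` is constant on a
half-open interval of length `1 / σ` containing `0`, where `σ ^ 2 = Var S`. The normal distribution
function grows on it by at least `(1 / σ) * exp (-1 / (2 * σ ^ 2)) / √(2 * π)`, and half of this
growth is a lower bound for `D_S`. It remains to see that `Var S / n` tends to `gS d ρ > 0`. On the
flat torus `ℝ^d / (L ℤ)^d` the probability that two given points are both isolated only depends on
the difference of the points, which yields a closed formula for `Var S`, in which the terms of order
`n ^ 2` cancel in the limit.

As a real `liminf` has a junk value when the sequence is unbounded, one also needs `√n * D_S` to be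
bounded. This is a Berry–Esseen bound by Stein's method, for the coupling that resamples one
coordinate at a time: `S` has bounded differences, by a packing argument, and a change of one point
only affects the points nearby, so the Efron–Stein inequality controls the variance of the Stein
factor.
-/

section GaussianDensity

lemma continuous_gaussianPDFReal (μ : ℝ) (v : ℝ≥0) : Continuous (gaussianPDFReal μ v) := by
  unfold gaussianPDFReal
  fun_prop

lemma hasDerivAt_gaussianPDFReal (μ : ℝ) (v : ℝ≥0) (x : ℝ) :
    HasDerivAt (gaussianPDFReal μ v) (-((x - μ) / v) * gaussianPDFReal μ v x) x := by
  have hexponent : HasDerivAt (fun y : ℝ => -(y - μ) ^ 2 / (2 * v)) (-((x - μ) / v)) x := by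
    refine ((((hasDerivAt_id x).sub_const μ).pow 2).neg.div_const (2 * (v : ℝ))).congr_deriv ?_
    simp only [id, Nat.cast_ofNat, Nat.add_one_sub_one, pow_one, mul_one]
    rw [← mul_neg, mul_div_mul_left _ _ two_ne_zero, neg_div]
  refine (hexponent.exp.const_mul _).congr_deriv ?_
  simp only [gaussianPDFReal]
  ring

lemma gaussianPDFReal_zero_one (x : ℝ) :
    gaussianPDFReal 0 1 x = (Real.sqrt (2 * Real.pi))⁻¹ * Real.exp (-x ^ 2 / 2) := by
  simp [gaussianPDFReal]

lemma gaussianPDFReal_zero_one_anti {x y : ℝ} (hxy : |x| ≤ |y|) :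
    gaussianPDFReal 0 1 y ≤ gaussianPDFReal 0 1 x := by
  have := sq_le_sq.2 hxy
  rw [gaussianPDFReal_zero_one, gaussianPDFReal_zero_one]
  gcongr

lemma gaussianPDFReal_zero_one_neg (x : ℝ) :
    gaussianPDFReal 0 1 (-x) = gaussianPDFReal 0 1 x := by
  simp [gaussianPDFReal_zero_one]

lemma gaussianPDFReal_zero_one_le_one (x : ℝ) : gaussianPDFReal 0 1 x ≤ 1 := by
  refine (gaussianPDFReal_zero_one_anti (x := 0) (by simp)).trans ?_
  rw [gaussianPDFReal_zero_one]
  simp only [ne_eq, OfNat.ofNat_ne_zero, not_false_eq_true, zero_pow, neg_zero, zero_div,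
    Real.exp_zero, mul_one]
  refine inv_le_one_of_one_le₀ (Real.one_le_sqrt.2 ?_)
  linarith [Real.pi_gt_three]

lemma one_le_five_mul_gaussianPDFReal_one : 1 ≤ 5 * gaussianPDFReal 0 1 1 := by
  have hsq : (Real.sqrt (2 * Real.pi) * Real.exp (1 / 2)) ^ 2 ≤ 5 ^ 2 := by
    rw [mul_pow, Real.sq_sqrt (by positivity), ← Real.exp_nat_mul]
    norm_num
    nlinarith [Real.exp_one_lt_d9, Real.pi_lt_d2, Real.pi_pos, Real.exp_pos 1]
  have hle : Real.sqrt (2 * Real.pi) * Real.exp (1 / 2) ≤ 5 := by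
    nlinarith [Real.sqrt_nonneg (2 * Real.pi), Real.exp_pos (1 / 2)]
  rw [gaussianPDFReal_zero_one, show (-(1 : ℝ) ^ 2 / 2) = -(1 / 2) by norm_num, Real.exp_neg,
    ← mul_inv, ← div_eq_mul_inv, le_div_iff₀ (by positivity), one_mul]
  exact hle

lemma integral_Ioi_mul_gaussianPDFReal (w : ℝ) :
    IntegrableOn (fun x => x * gaussianPDFReal 0 1 x) (Ioi w) ∧
      ∫ x in Ioi w, x * gaussianPDFReal 0 1 x = gaussianPDFReal 0 1 w := by
  have hderiv (x : ℝ) :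
      HasDerivAt (fun y => -gaussianPDFReal 0 1 y) (x * gaussianPDFReal 0 1 x) x :=
    (hasDerivAt_gaussianPDFReal 0 1 x).neg.congr_deriv (by simp)
  have hint : Integrable (fun x => x * gaussianPDFReal 0 1 x) := by
    refine ((integrable_mul_exp_neg_mul_sq (b := 1 / 2) (by norm_num)).const_mul
      (Real.sqrt (2 * Real.pi))⁻¹).congr (.of_forall fun x => ?_)
    simp only [gaussianPDFReal_zero_one]
    ring_nf
  have hlim : Tendsto (fun y => -gaussianPDFReal 0 1 y) atTop (𝓝 0) := by
    have hexp : Tendsto (fun x : ℝ => Real.exp (-x ^ 2 / 2)) atTop (𝓝 0) := by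
      refine Real.tendsto_exp_atBot.comp ?_
      simp only [neg_div]
      exact tendsto_neg_atTop_atBot.comp
        ((tendsto_pow_atTop two_ne_zero).atTop_div_const two_pos)
    simpa [gaussianPDFReal_zero_one] using (hexp.const_mul (Real.sqrt (2 * Real.pi))⁻¹).neg
  refine ⟨hint.integrableOn, ?_⟩
  rw [integral_Ioi_of_hasDerivAt_of_tendsto' (fun x _ => hderiv x) hint.integrableOn hlim]
  simp

lemma mul_integral_Ioi_gaussianPDFReal_le (w : ℝ) :
    w * ∫ x in Ioi w, gaussianPDFReal 0 1 x ≤ gaussianPDFReal 0 1 w := by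
  obtain ⟨hint, heq⟩ := integral_Ioi_mul_gaussianPDFReal w
  rw [← heq, ← integral_const_mul]
  refine setIntegral_mono_on ((integrable_gaussianPDFReal 0 1).const_mul w).integrableOn hint
    measurableSet_Ioi fun x hx => ?_
  exact mul_le_mul_of_nonneg_right (le_of_lt hx) (gaussianPDFReal_nonneg 0 1 x)

lemma integral_Ioi_gaussianPDFReal_le {w : ℝ} (hw : 0 ≤ w) :
    ∫ x in Ioi w, gaussianPDFReal 0 1 x ≤ 5 * gaussianPDFReal 0 1 w := by
  have hpos := gaussianPDFReal_nonneg 0 1 w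
  rcases le_total 1 w with h1w | hw1
  · have hmills := mul_integral_Ioi_gaussianPDFReal_le w
    have htail : 0 ≤ ∫ x in Ioi w, gaussianPDFReal 0 1 x :=
      integral_nonneg fun x => gaussianPDFReal_nonneg 0 1 x
    nlinarith
  · calc ∫ x in Ioi w, gaussianPDFReal 0 1 x
        ≤ ∫ x, gaussianPDFReal 0 1 x :=
          setIntegral_le_integral (integrable_gaussianPDFReal 0 1)
            (.of_forall fun x => gaussianPDFReal_nonneg 0 1 x)
      _ = 1 := integral_gaussianPDFReal_eq_one 0 one_ne_zero
      _ ≤ 5 * gaussianPDFReal 0 1 1 := one_le_five_mul_gaussianPDFReal_one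
      _ ≤ 5 * gaussianPDFReal 0 1 w := by
          gcongr
          exact gaussianPDFReal_zero_one_anti (by rwa [abs_of_nonneg hw, abs_one])

lemma integral_Iic_gaussianPDFReal_eq (w : ℝ) :
    ∫ x in Iic w, gaussianPDFReal 0 1 x = ∫ x in Ioi (-w), gaussianPDFReal 0 1 x := by
  simp [← integral_comp_neg_Iic, gaussianPDFReal_zero_one_neg]

end GaussianDensity

section StandardNormalCDF

lemma stdGaussCDF_nonneg (t : ℝ) : 0 ≤ stdGaussCDF t := ENNReal.toReal_nonneg

lemma stdGaussCDF_le_one (t : ℝ) : stdGaussCDF t ≤ 1 := measureReal_le_one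

lemma stdGaussCDF_sub {a b : ℝ} (hab : a ≤ b) :
    stdGaussCDF b - stdGaussCDF a = ∫ x in Ioc a b, gaussianPDFReal 0 1 x := by
  have hcdf (t : ℝ) : stdGaussCDF t = ∫ x in Iic t, gaussianPDFReal 0 1 x := by
    rw [stdGaussCDF, gaussianReal_apply_eq_integral _ one_ne_zero,
      ENNReal.toReal_ofReal (integral_nonneg fun x => gaussianPDFReal_nonneg _ _ _)]
  rw [hcdf, hcdf, intervalIntegral.integral_Iic_sub_Iic
      (integrable_gaussianPDFReal _ _).integrableOn (integrable_gaussianPDFReal _ _).integrableOn,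
    intervalIntegral.integral_of_le hab]

lemma stdGaussCDF_sub_le {a b : ℝ} (hab : a ≤ b) : stdGaussCDF b - stdGaussCDF a ≤ b - a := by
  calc stdGaussCDF b - stdGaussCDF a
      = ∫ x in Ioc a b, gaussianPDFReal 0 1 x := stdGaussCDF_sub hab
    _ ≤ ∫ _ in Ioc a b, (1 : ℝ) :=
        setIntegral_mono (integrable_gaussianPDFReal 0 1).integrableOn (by simp)
          gaussianPDFReal_zero_one_le_one
    _ = b - a := by simp [hab]

lemma mul_gaussianPDFReal_le_stdGaussCDF_sub {a b s : ℝ} (hab : a ≤ b) (ha : -s ≤ a)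
    (hb : b ≤ s) : (b - a) * gaussianPDFReal 0 1 s ≤ stdGaussCDF b - stdGaussCDF a := by
  calc (b - a) * gaussianPDFReal 0 1 s
      = ∫ _ in Ioc a b, gaussianPDFReal 0 1 s := by simp [hab]
    _ ≤ ∫ x in Ioc a b, gaussianPDFReal 0 1 x := by
        refine setIntegral_mono_on (by simp) (integrable_gaussianPDFReal 0 1).integrableOn
          measurableSet_Ioc fun x hx => gaussianPDFReal_zero_one_anti ?_
        exact (abs_le.2 ⟨ha.trans hx.1.le, hx.2.trans hb⟩).trans (le_abs_self s)
    _ = stdGaussCDF b - stdGaussCDF a := (stdGaussCDF_sub hab).symm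

end StandardNormalCDF

section SteinSolution

/-- The bounded solution `f` of Stein's equation `f' w - w * f w = h w - γ[h]`, where `γ` is the
standard normal law. -/
def steinSolution (h : ℝ → ℝ) (w : ℝ) : ℝ :=
  (gaussianPDFReal 0 1 w)⁻¹ *
    ∫ x in Iic w, gaussianPDFReal 0 1 x * (h x - ∫ y, h y ∂gaussianReal 0 1)

variable {h : ℝ → ℝ} {C : ℝ}

lemma integrable_gaussianPDFReal_mul_sub (hc : Continuous h)
    (hC : ∀ x, |h x - ∫ y, h y ∂gaussianReal 0 1| ≤ C) :
    Integrable fun x => gaussianPDFReal 0 1 x * (h x - ∫ y, h y ∂gaussianReal 0 1) :=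
  (integrable_gaussianPDFReal 0 1).mul_bdd (hc.sub continuous_const).aestronglyMeasurable
    (.of_forall hC)

lemma integral_gaussianPDFReal_mul_sub (hc : Continuous h)
    (hC : ∀ x, |h x - ∫ y, h y ∂gaussianReal 0 1| ≤ C) :
    ∫ x, gaussianPDFReal 0 1 x * (h x - ∫ y, h y ∂gaussianReal 0 1) = 0 := by
  have hint : Integrable (fun x => h x - ∫ y, h y ∂gaussianReal 0 1) (gaussianReal 0 1) :=
    .of_bound (hc.sub continuous_const).aestronglyMeasurable C (.of_forall hC)
  have hh : Integrable h (gaussianReal 0 1) :=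
    (hint.add (integrable_const (∫ y, h y ∂gaussianReal 0 1))).congr
      (.of_forall fun x => sub_add_cancel _ _)
  have hzero := integral_sub hh (integrable_const (∫ y, h y ∂gaussianReal 0 1))
  rw [integral_gaussianReal_eq_integral_smul one_ne_zero] at hzero
  simpa using hzero

lemma abs_setIntegral_gaussianPDFReal_mul_sub_le
    (hC : ∀ x, |h x - ∫ y, h y ∂gaussianReal 0 1| ≤ C) (s : Set ℝ) :
    |∫ x in s, gaussianPDFReal 0 1 x * (h x - ∫ y, h y ∂gaussianReal 0 1)| ≤
      C * ∫ x in s, gaussianPDFReal 0 1 x := by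
  rw [← integral_const_mul, ← Real.norm_eq_abs]
  refine norm_integral_le_of_norm_le (μ := volume.restrict s)
    ((integrable_gaussianPDFReal 0 1).const_mul C).integrableOn (.of_forall fun x => ?_)
  rw [norm_mul, Real.norm_of_nonneg (gaussianPDFReal_nonneg 0 1 x), mul_comm]
  exact mul_le_mul_of_nonneg_right (hC x) (gaussianPDFReal_nonneg 0 1 x)

lemma abs_setIntegral_Iic_gaussianPDFReal_mul_sub_le (hc : Continuous h)
    (hC : ∀ x, |h x - ∫ y, h y ∂gaussianReal 0 1| ≤ C) (w : ℝ) :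
    |∫ x in Iic w, gaussianPDFReal 0 1 x * (h x - ∫ y, h y ∂gaussianReal 0 1)| ≤
      C * ∫ x in Ioi |w|, gaussianPDFReal 0 1 x := by
  rcases le_total 0 w with hw | hw
  · have hint := integrable_gaussianPDFReal_mul_sub hc hC
    have hsplit := intervalIntegral.integral_Iic_add_Ioi (b := w) hint.integrableOn
      hint.integrableOn
    rw [integral_gaussianPDFReal_mul_sub hc hC] at hsplit
    rw [eq_neg_of_add_eq_zero_left hsplit, abs_neg, abs_of_nonneg hw]
    exact abs_setIntegral_gaussianPDFReal_mul_sub_le hC _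
  · rw [abs_of_nonpos hw, ← integral_Iic_gaussianPDFReal_eq]
    exact abs_setIntegral_gaussianPDFReal_mul_sub_le hC _

lemma abs_steinSolution_le_mul_integral (hc : Continuous h)
    (hC : ∀ x, |h x - ∫ y, h y ∂gaussianReal 0 1| ≤ C) (w : ℝ) :
    |steinSolution h w| ≤
      (gaussianPDFReal 0 1 |w|)⁻¹ * (C * ∫ x in Ioi |w|, gaussianPDFReal 0 1 x) := by
  have hpdf : gaussianPDFReal 0 1 |w| = gaussianPDFReal 0 1 w := by
    simp [gaussianPDFReal_zero_one]
  rw [steinSolution, abs_mul, abs_of_nonneg (inv_nonneg.2 (gaussianPDFReal_nonneg 0 1 w)), hpdf]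
  gcongr
  · exact inv_nonneg.2 (gaussianPDFReal_nonneg 0 1 w)
  · exact abs_setIntegral_Iic_gaussianPDFReal_mul_sub_le hc hC w

lemma abs_steinSolution_le (hc : Continuous h)
    (hC : ∀ x, |h x - ∫ y, h y ∂gaussianReal 0 1| ≤ C) (w : ℝ) :
    |steinSolution h w| ≤ 5 * C := by
  have hC0 : 0 ≤ C := (abs_nonneg _).trans (hC 0)
  refine (abs_steinSolution_le_mul_integral hc hC w).trans ?_
  rw [inv_mul_le_iff₀ (gaussianPDFReal_pos 0 1 _ one_ne_zero)]
  linarith [mul_le_mul_of_nonneg_left (integral_Ioi_gaussianPDFReal_le (abs_nonneg w)) hC0]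

lemma abs_mul_steinSolution_le (hc : Continuous h)
    (hC : ∀ x, |h x - ∫ y, h y ∂gaussianReal 0 1| ≤ C) (w : ℝ) :
    |w * steinSolution h w| ≤ C := by
  have hC0 : 0 ≤ C := (abs_nonneg _).trans (hC 0)
  rw [abs_mul]
  refine (mul_le_mul_of_nonneg_left (abs_steinSolution_le_mul_integral hc hC w)
    (abs_nonneg w)).trans ?_
  rw [mul_left_comm, inv_mul_le_iff₀ (gaussianPDFReal_pos 0 1 _ one_ne_zero)]
  linarith [mul_le_mul_of_nonneg_left (mul_integral_Ioi_gaussianPDFReal_le |w|) hC0]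

lemma hasDerivAt_steinSolution (hc : Continuous h)
    (hC : ∀ x, |h x - ∫ y, h y ∂gaussianReal 0 1| ≤ C) (w : ℝ) :
    HasDerivAt (steinSolution h)
      (w * steinSolution h w + (h w - ∫ y, h y ∂gaussianReal 0 1)) w := by
  set c := ∫ y, h y ∂gaussianReal 0 1
  have hpos := (gaussianPDFReal_pos 0 1 w one_ne_zero).ne'
  have hint := integrable_gaussianPDFReal_mul_sub hc hC
  have hprim : HasDerivAt (fun u => ∫ x in Iic u, gaussianPDFReal 0 1 x * (h x - c))
      (gaussianPDFReal 0 1 w * (h w - c)) w := by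
    have hcont : Continuous fun x => gaussianPDFReal 0 1 x * (h x - c) :=
      (continuous_gaussianPDFReal 0 1).mul (hc.sub continuous_const)
    have hsplit (u : ℝ) : ∫ x in Iic u, gaussianPDFReal 0 1 x * (h x - c) =
        (∫ x in Iic 0, gaussianPDFReal 0 1 x * (h x - c)) +
          ∫ x in (0 : ℝ)..u, gaussianPDFReal 0 1 x * (h x - c) := by
      rw [← intervalIntegral.integral_Iic_sub_Iic hint.integrableOn hint.integrableOn]
      ring
    rw [funext hsplit]
    exact (intervalIntegral.integral_hasDerivAt_right hint.intervalIntegrable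
      (hcont.stronglyMeasurableAtFilter _ _) hcont.continuousAt).const_add _
  refine (((hasDerivAt_gaussianPDFReal 0 1 w).inv hpos).mul hprim).congr_deriv ?_
  simp only [steinSolution, NNReal.coe_one, div_one, sub_zero, Pi.inv_apply]
  field_simp
  ring

lemma abs_deriv_steinSolution_le (hc : Continuous h)
    (hC : ∀ x, |h x - ∫ y, h y ∂gaussianReal 0 1| ≤ C) (w : ℝ) :
    |w * steinSolution h w + (h w - ∫ y, h y ∂gaussianReal 0 1)| ≤ 2 * C := by
  linarith [abs_add_le (w * steinSolution h w) (h w - ∫ y, h y ∂gaussianReal 0 1), hC w,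
    abs_mul_steinSolution_le hc hC w]

lemma abs_steinSolution_sub_le (hc : Continuous h)
    (hC : ∀ x, |h x - ∫ y, h y ∂gaussianReal 0 1| ≤ C) (w v : ℝ) :
    |steinSolution h w - steinSolution h v| ≤ 2 * C * |w - v| :=
  convex_univ.norm_image_sub_le_of_norm_hasDerivWithin_le
    (fun x _ => (hasDerivAt_steinSolution hc hC x).hasDerivWithinAt)
    (fun x _ => abs_deriv_steinSolution_le hc hC x) (mem_univ v) (mem_univ w)

lemma abs_deriv_steinSolution_sub_le (hc : Continuous h)
    (hC : ∀ x, |h x - ∫ y, h y ∂gaussianReal 0 1| ≤ C) {w v δ η : ℝ} (hwv : |w - v| ≤ δ)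
    (hη : |h w - h v| ≤ η) :
    |(w * steinSolution h w + (h w - ∫ y, h y ∂gaussianReal 0 1)) -
        (v * steinSolution h v + (h v - ∫ y, h y ∂gaussianReal 0 1))| ≤
      C * (5 + 2 * |w|) * δ + η := by
  have hC0 : 0 ≤ C := (abs_nonneg _).trans (hC 0)
  have hδ : 0 ≤ δ := (abs_nonneg _).trans hwv
  have hfirst : |(w - v) * steinSolution h v| ≤ δ * (5 * C) := by
    rw [abs_mul]
    exact mul_le_mul hwv (abs_steinSolution_le hc hC v) (abs_nonneg _) hδ
  have hsecond : |w * (steinSolution h w - steinSolution h v)| ≤ |w| * (2 * C * δ) := by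
    rw [abs_mul]
    gcongr
    exact (abs_steinSolution_sub_le hc hC w v).trans (by gcongr)
  calc _ = |(w - v) * steinSolution h v + w * (steinSolution h w - steinSolution h v)
            + (h w - h v)| := by congr 1; ring
    _ ≤ δ * (5 * C) + |w| * (2 * C * δ) + η :=
        (abs_add_three _ _ _).trans (add_le_add_three hfirst hsecond hη)
    _ = C * (5 + 2 * |w|) * δ + η := by ring

lemma abs_steinSolution_taylor_le (hc : Continuous h)
    (hC : ∀ x, |h x - ∫ y, h y ∂gaussianReal 0 1| ≤ C) {w v δ η : ℝ} (hwv : |w - v| ≤ δ)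
    (hη : ∀ x, |w - x| ≤ δ → |h w - h x| ≤ η) :
    |steinSolution h w - steinSolution h v -
        (w - v) * (w * steinSolution h w + (h w - ∫ y, h y ∂gaussianReal 0 1))| ≤
      (C * (5 + 2 * |w|) * δ + η) * δ := by
  set f' : ℝ → ℝ := fun x => x * steinSolution h x + (h x - ∫ y, h y ∂gaussianReal 0 1)
  have hbound : ∀ x ∈ uIcc v w, ‖f' x - f' w‖ ≤ C * (5 + 2 * |w|) * δ + η := fun x hx => by
    have hwx : |w - x| ≤ δ := (abs_sub_right_of_mem_uIcc hx).trans hwv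
    rw [norm_sub_rev]
    exact abs_deriv_steinSolution_sub_le hc hC hwx (hη x hwx)
  have hderiv (x : ℝ) : HasDerivWithinAt (fun u => steinSolution h u - u * f' w)
      (f' x - f' w) (uIcc v w) x := by
    have hlin : HasDerivAt (fun u => u * f' w) (f' w) x := by
      simpa using (hasDerivAt_id x).mul_const (f' w)
    exact ((hasDerivAt_steinSolution hc hC x).sub hlin).hasDerivWithinAt
  have hmean := (convex_uIcc v w).norm_image_sub_le_of_norm_hasDerivWithin_le
    (fun x _ => hderiv x) hbound left_mem_uIcc right_mem_uIcc
  have hnonneg := (norm_nonneg _).trans (hbound w right_mem_uIcc)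
  calc _ = ‖steinSolution h w - w * f' w - (steinSolution h v - v * f' w)‖ := by
        rw [Real.norm_eq_abs]; congr 1; ring
    _ ≤ _ := hmean.trans (mul_le_mul_of_nonneg_left hwv hnonneg)

end SteinSolution

section Ramp

/-- The continuous function equal to `1` on `(-∞, z]`, to `0` on `[z + α, ∞)` and affine in
between; a smoothing of the indicator of `(-∞, z]`. -/
def ramp (z α w : ℝ) : ℝ := max 0 (min 1 (1 + (z - w) / α))

lemma continuous_ramp (z α : ℝ) : Continuous (ramp z α) := by unfold ramp; fun_prop

lemma ramp_mem_Icc (z α w : ℝ) : ramp z α w ∈ Icc (0 : ℝ) 1 :=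
  ⟨le_max_left _ _, max_le zero_le_one (min_le_left _ _)⟩

variable {z α w v : ℝ}

lemma ramp_eq_one (hα : 0 < α) (hw : w ≤ z) : ramp z α w = 1 := by
  have : 0 ≤ (z - w) / α := div_nonneg (sub_nonneg.2 hw) hα.le
  rw [ramp, min_eq_left (by linarith), max_eq_right zero_le_one]

lemma ramp_eq_zero (hα : 0 < α) (hw : z + α ≤ w) : ramp z α w = 0 := by
  have : (z - w) / α ≤ -1 := by rw [div_le_iff₀ hα]; linarith
  exact max_eq_left ((min_le_right _ _).trans (by linarith))

lemma indicator_Iic_le_ramp (hα : 0 < α) (w : ℝ) :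
    (Iic z).indicator (fun _ => (1 : ℝ)) w ≤ ramp z α w :=
  indicator_le' (fun _ hw => (ramp_eq_one hα hw).ge) (fun w _ => (ramp_mem_Icc z α w).1) w

lemma ramp_le_indicator_Iic (hα : 0 < α) (w : ℝ) :
    ramp z α w ≤ (Iic (z + α)).indicator (fun _ => (1 : ℝ)) w :=
  le_indicator (fun w _ => (ramp_mem_Icc z α w).2)
    (fun _ hw => (ramp_eq_zero hα (not_le.1 hw).le).le) w

lemma abs_ramp_sub_le (hα : 0 < α) (w v : ℝ) : |ramp z α w - ramp z α v| ≤ |w - v| / α := by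
  have hmax (x y : ℝ) : |max 0 x - max 0 y| ≤ |x - y| := by
    simpa using abs_max_sub_max_le_max 0 x 0 y
  have hmin (x y : ℝ) : |min 1 x - min 1 y| ≤ |x - y| := by
    simpa using abs_min_sub_min_le_max 1 x 1 y
  refine (hmax _ _).trans ((hmin _ _).trans_eq ?_)
  rw [show 1 + (z - w) / α - (1 + (z - v) / α) = (v - w) / α by ring, abs_div, abs_of_pos hα,
    abs_sub_comm]

lemma abs_ramp_sub_le_indicator {δ : ℝ} (hα : 0 < α) (hδ : 0 < δ) (hwv : |w - v| ≤ δ) :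
    |ramp z α w - ramp z α v| ≤
      δ / α * (Ioc (z - 2 * δ) (z + α + δ)).indicator (fun _ => (1 : ℝ)) w := by
  obtain ⟨hlo, hhi⟩ := abs_le.1 hwv
  by_cases hw : w ∈ Ioc (z - 2 * δ) (z + α + δ)
  · rw [indicator_of_mem hw, mul_one]
    exact (abs_ramp_sub_le hα w v).trans (by gcongr)
  · rw [indicator_of_notMem hw, mul_zero]
    rw [mem_Ioc, not_and_or, not_lt, not_le] at hw
    rcases hw with hw | hw
    · rw [ramp_eq_one hα (by linarith), ramp_eq_one hα (by linarith), sub_self, abs_zero]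
    · rw [ramp_eq_zero hα (by linarith), ramp_eq_zero hα (by linarith), sub_self, abs_zero]

end Ramp

section SteinCoupling

variable {Ω ι : Type*} [MeasurableSpace Ω] [Fintype ι] {P : Measure Ω} {W : Ω → ℝ}
  {W' D : ι → Ω → ℝ} {δ : ℝ}

/-- A Stein coupling of `W` with perturbations `W' j` and weights `D j`, all increments being
bounded by `δ`: the identity `E[W F(W)] = ∑ j, E[D j * (F(W) - F(W' j))]` plays the role of Gaussian
integration by parts. -/
structure IsSteinCoupling (P : Measure Ω) (W : Ω → ℝ) (W' D : ι → Ω → ℝ) (δ : ℝ) : Prop where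
  measurable : Measurable W
  measurable_perturbed (j : ι) : Measurable (W' j)
  measurable_weight (j : ι) : Measurable (D j)
  abs_sub_le (j : ι) (ω : Ω) : |W ω - W' j ω| ≤ δ
  abs_weight_le (j : ι) (ω : Ω) : |D j ω| ≤ δ
  integral_mul_comp (F : ℝ → ℝ) (C : ℝ) (hF : Measurable F) (hC : ∀ x, |F x| ≤ C) :
    ∫ ω, W ω * F (W ω) ∂P = ∑ j, ∫ ω, D j ω * (F (W ω) - F (W' j ω)) ∂P

/-- The random variable `T = ∑ j, D j * (W - W' j)` of a Stein coupling; `W` is close to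
a standard Gaussian when `T` is close to `1`. -/
def steinFactor (W : Ω → ℝ) (W' D : ι → Ω → ℝ) (ω : Ω) : ℝ := ∑ j, D j ω * (W ω - W' j ω)

namespace IsSteinCoupling

lemma measurable_steinFactor (hW : IsSteinCoupling P W W' D δ) :
    Measurable (steinFactor W W' D) :=
  Finset.measurable_sum _ fun j _ =>
    (hW.measurable_weight j).mul (hW.measurable.sub (hW.measurable_perturbed j))

lemma abs_steinFactor_le (hW : IsSteinCoupling P W W' D δ) (ω : Ω) :
    |steinFactor W W' D ω| ≤ Fintype.card ι * δ ^ 2 := by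
  refine (Finset.abs_sum_le_sum_abs _ _).trans
    ((Finset.sum_le_card_nsmul _ _ (δ ^ 2) fun j _ => ?_).trans_eq (by simp))
  rw [abs_mul, sq]
  exact mul_le_mul (hW.abs_weight_le j ω) (hW.abs_sub_le j ω) (abs_nonneg _)
    ((abs_nonneg _).trans (hW.abs_weight_le j ω))

variable {h : ℝ → ℝ} {C : ℝ}

lemma abs_deriv_sub_sum_le (hW : IsSteinCoupling P W W' D δ) (hc : Continuous h)
    (hC : ∀ x, |h x - ∫ y, h y ∂gaussianReal 0 1| ≤ C) {η : ℝ} {ω : Ω}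
    (hη : ∀ x, |W ω - x| ≤ δ → |h (W ω) - h x| ≤ η) :
    |W ω * steinSolution h (W ω) + (h (W ω) - ∫ y, h y ∂gaussianReal 0 1) -
        ∑ j, D j ω * (steinSolution h (W ω) - steinSolution h (W' j ω))| ≤
      2 * C * |1 - steinFactor W W' D ω| +
        Fintype.card ι * δ ^ 2 * (C * (5 + 2 * |W ω|) * δ + η) := by
  set f' := W ω * steinSolution h (W ω) + (h (W ω) - ∫ y, h y ∂gaussianReal 0 1)
  set r : ι → ℝ := fun j =>
    steinSolution h (W ω) - steinSolution h (W' j ω) - (W ω - W' j ω) * f' with hr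
  have hdecomp : f' - ∑ j, D j ω * (steinSolution h (W ω) - steinSolution h (W' j ω)) =
      (1 - steinFactor W W' D ω) * f' - ∑ j, D j ω * r j := by
    rw [steinFactor, sub_mul, one_mul, Finset.sum_mul, sub_sub, ← Finset.sum_add_distrib]
    congr 1
    exact Finset.sum_congr rfl fun j _ => by simp only [hr]; ring
  have hfactor : |(1 - steinFactor W W' D ω) * f'| ≤ 2 * C * |1 - steinFactor W W' D ω| := by
    rw [abs_mul, mul_comm]
    exact mul_le_mul_of_nonneg_right (abs_deriv_steinSolution_le hc hC (W ω)) (abs_nonneg _)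
  have hremainder : |∑ j, D j ω * r j| ≤
      Fintype.card ι * δ ^ 2 * (C * (5 + 2 * |W ω|) * δ + η) := by
    refine (Finset.abs_sum_le_sum_abs _ _).trans ((Finset.sum_le_card_nsmul _ _
      (δ * ((C * (5 + 2 * |W ω|) * δ + η) * δ)) fun j _ => ?_).trans_eq (by simp; ring))
    rw [abs_mul]
    exact mul_le_mul (hW.abs_weight_le j ω)
      (abs_steinSolution_taylor_le hc hC (hW.abs_sub_le j ω) hη) (abs_nonneg _)
      ((abs_nonneg _).trans (hW.abs_weight_le j ω))
  rw [hdecomp]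
  exact (abs_sub _ _).trans (add_le_add hfactor hremainder)

section Probability

variable [IsProbabilityMeasure P]

lemma integrable_abs_one_sub_steinFactor (hW : IsSteinCoupling P W W' D δ) :
    Integrable (fun ω => |1 - steinFactor W W' D ω|) P :=
  ((integrable_const 1).sub (.of_bound hW.measurable_steinFactor.aestronglyMeasurable _
    (.of_forall hW.abs_steinFactor_le))).abs

lemma integrable_weight_mul_sub (hW : IsSteinCoupling P W W' D δ) {F : ℝ → ℝ}
    (hF : Measurable F) (hC : ∀ x, |F x| ≤ C) (j : ι) :
    Integrable (fun ω => D j ω * (F (W ω) - F (W' j ω))) P := by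
  have hcomp {V : Ω → ℝ} (hV : Measurable V) : Integrable (fun ω => F (V ω)) P :=
    .of_bound (hF.comp hV).aestronglyMeasurable C (.of_forall fun ω => hC _)
  exact ((hcomp hW.measurable).sub (hcomp (hW.measurable_perturbed j))).bdd_mul
    (hW.measurable_weight j).aestronglyMeasurable (.of_forall fun ω => hW.abs_weight_le j ω)

lemma integral_comp_sub_eq (hW : IsSteinCoupling P W W' D δ) (hc : Continuous h)
    (hC : ∀ x, |h x - ∫ y, h y ∂gaussianReal 0 1| ≤ C) :
    (∫ ω, h (W ω) ∂P) - ∫ y, h y ∂gaussianReal 0 1 =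
      ∫ ω, (W ω * steinSolution h (W ω) + (h (W ω) - ∫ y, h y ∂gaussianReal 0 1) -
        ∑ j, D j ω * (steinSolution h (W ω) - steinSolution h (W' j ω))) ∂P := by
  have hmeas : Measurable (steinSolution h) :=
    (continuous_iff_continuousAt.2 fun w =>
      (hasDerivAt_steinSolution hc hC w).continuousAt).measurable
  have hfW : Integrable (fun ω => W ω * steinSolution h (W ω)) P :=
    .of_bound (hW.measurable.mul (hmeas.comp hW.measurable)).aestronglyMeasurable C
      (.of_forall fun ω => abs_mul_steinSolution_le hc hC (W ω))
  have hhW : Integrable (fun ω => h (W ω) - ∫ y, h y ∂gaussianReal 0 1) P :=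
    .of_bound ((hc.measurable.comp hW.measurable).sub_const _).aestronglyMeasurable C
      (.of_forall fun ω => hC (W ω))
  have hsum (j : ι) (_ : j ∈ Finset.univ) :=
    hW.integrable_weight_mul_sub hmeas (abs_steinSolution_le hc hC) j
  have hadd : Integrable (fun ω => W ω * steinSolution h (W ω) +
      (h (W ω) - ∫ y, h y ∂gaussianReal 0 1)) P := hfW.add hhW
  rw [integral_sub hadd (integrable_finsetSum _ hsum), integral_add hfW hhW,
    integral_finsetSum _ hsum,
    hW.integral_mul_comp _ _ hmeas (abs_steinSolution_le hc hC), add_sub_cancel_left,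
    integral_sub _ (integrable_const _)]
  · simp
  · exact (hhW.add (integrable_const _)).congr (.of_forall fun ω => sub_add_cancel _ _)

lemma abs_integral_comp_sub_le (hW : IsSteinCoupling P W W' D δ) (hint : Integrable W P)
    (hone : ∫ ω, |W ω| ∂P ≤ 1) (hδ : 0 ≤ δ) (hc : Continuous h)
    (hC : ∀ x, |h x - ∫ y, h y ∂gaussianReal 0 1| ≤ C) {η : ℝ → ℝ}
    (hη : ∀ w x, |w - x| ≤ δ → |h w - h x| ≤ η w) (hηint : Integrable (fun ω => η (W ω)) P) :
    |(∫ ω, h (W ω) ∂P) - ∫ y, h y ∂gaussianReal 0 1| ≤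
      2 * C * (∫ ω, |1 - steinFactor W W' D ω| ∂P) +
        Fintype.card ι * δ ^ 2 * (7 * C * δ + ∫ ω, η (W ω) ∂P) := by
  have hC0 : 0 ≤ C := (abs_nonneg _).trans (hC 0)
  have hT := hW.integrable_abs_one_sub_steinFactor
  have hlin : Integrable (fun ω => C * (5 + 2 * |W ω|) * δ) P :=
    ((((integrable_const (5 : ℝ)).add (hint.abs.const_mul 2)).const_mul C).mul_const δ)
  have hsum : Integrable (fun ω => C * (5 + 2 * |W ω|) * δ + η (W ω)) P := hlin.add hηint
  rw [hW.integral_comp_sub_eq hc hC, ← Real.norm_eq_abs]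
  have hlin_le : ∫ ω, C * (5 + 2 * |W ω|) * δ ∂P ≤ 7 * C * δ := by
    rw [integral_mul_const, integral_const_mul,
      integral_add (integrable_const _) (hint.abs.const_mul 2), integral_const_mul]
    simp only [integral_const, probReal_univ, smul_eq_mul, one_mul]
    nlinarith [mul_nonneg hC0 hδ]
  calc _ ≤ ∫ ω, (2 * C * |1 - steinFactor W W' D ω| +
          Fintype.card ι * δ ^ 2 * (C * (5 + 2 * |W ω|) * δ + η (W ω))) ∂P :=
        norm_integral_le_of_norm_le ((hT.const_mul _).add (hsum.const_mul _))
          (.of_forall fun ω => hW.abs_deriv_sub_sum_le hc hC (hη (W ω)))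
    _ = 2 * C * (∫ ω, |1 - steinFactor W W' D ω| ∂P) + Fintype.card ι * δ ^ 2 *
          ((∫ ω, C * (5 + 2 * |W ω|) * δ ∂P) + ∫ ω, η (W ω) ∂P) := by
        rw [integral_add (hT.const_mul _) (hsum.const_mul _), integral_const_mul,
          integral_const_mul, integral_add hlin hηint]
    _ ≤ 2 * C * (∫ ω, |1 - steinFactor W W' D ω| ∂P) +
        Fintype.card ι * δ ^ 2 * (7 * C * δ + ∫ ω, η (W ω) ∂P) := by gcongr

lemma abs_integral_ramp_sub_le (hW : IsSteinCoupling P W W' D δ) (hint : Integrable W P)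
    (hone : ∫ ω, |W ω| ∂P ≤ 1) (hδ : 0 < δ) {α : ℝ} (hα : 0 < α) (z : ℝ) :
    |(∫ ω, ramp z α (W ω) ∂P) - ∫ x, ramp z α x ∂gaussianReal 0 1| ≤
      2 * (∫ ω, |1 - steinFactor W W' D ω| ∂P) + Fintype.card ι * δ ^ 3 *
        (7 + α⁻¹ * P.real (W ⁻¹' Ioc (z - 2 * δ) (z + α + δ))) := by
  set s : Set ℝ := Ioc (z - 2 * δ) (z + α + δ)
  have hgauss : ∫ x, ramp z α x ∂gaussianReal 0 1 ∈ Icc (0 : ℝ) 1 :=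
    ⟨integral_nonneg fun x => (ramp_mem_Icc z α x).1, by
      simpa using integral_mono_of_nonneg (μ := gaussianReal 0 1)
        (.of_forall fun x => (ramp_mem_Icc z α x).1) (integrable_const (1 : ℝ))
        (.of_forall fun x => (ramp_mem_Icc z α x).2)⟩
  have hcenter (x : ℝ) : |ramp z α x - ∫ y, ramp z α y ∂gaussianReal 0 1| ≤ 1 := by
    obtain ⟨hx0, hx1⟩ := ramp_mem_Icc z α x
    exact abs_le.2 ⟨by linarith [hgauss.2], by linarith [hgauss.1]⟩
  have hcomp : (fun ω => s.indicator (fun _ => (1 : ℝ)) (W ω)) = (W ⁻¹' s).indicator 1 := by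
    ext ω; simp [indicator]
  have hmeas : MeasurableSet (W ⁻¹' s) := hW.measurable measurableSet_Ioc
  have hsint : Integrable (fun ω => s.indicator (fun _ => (1 : ℝ)) (W ω)) P :=
    hcomp ▸ (integrable_const (1 : ℝ)).indicator hmeas
  have hbound := hW.abs_integral_comp_sub_le hint hone hδ.le (continuous_ramp z α) hcenter
    (fun w x hwx => abs_ramp_sub_le_indicator hα hδ hwx) (hsint.const_mul (δ / α))
  rw [integral_const_mul, hcomp, integral_indicator_one hmeas] at hbound
  exact hbound.trans_eq (by ring)

end Probability

end IsSteinCoupling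

section Smoothing

variable {α : ℝ}

lemma measureReal_Iic_le_integral_ramp (μ : Measure ℝ) [IsProbabilityMeasure μ] (hα : 0 < α)
    (z : ℝ) : μ.real (Iic z) ≤ ∫ x, ramp z α x ∂μ := by
  rw [← integral_indicator_one measurableSet_Iic]
  exact integral_mono_of_nonneg
    (.of_forall fun x => indicator_nonneg (fun _ _ => zero_le_one) x)
    (.of_bound (continuous_ramp z α).aestronglyMeasurable 1 (.of_forall fun x => by
      rw [Real.norm_of_nonneg (ramp_mem_Icc z α x).1]; exact (ramp_mem_Icc z α x).2))
    (.of_forall (indicator_Iic_le_ramp hα))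

lemma integral_ramp_le_measureReal_Iic (μ : Measure ℝ) [IsProbabilityMeasure μ] (hα : 0 < α)
    (z : ℝ) : ∫ x, ramp z α x ∂μ ≤ μ.real (Iic (z + α)) := by
  rw [← integral_indicator_one measurableSet_Iic]
  exact integral_mono_of_nonneg (.of_forall fun x => (ramp_mem_Icc z α x).1)
    ((integrable_const (1 : ℝ)).indicator measurableSet_Iic)
    (.of_forall (ramp_le_indicator_Iic hα))

lemma abs_measureReal_sub_stdGaussCDF_le_of_ramp [IsProbabilityMeasure P] (hW : Measurable W)
    (hα : 0 < α) {ε : ℝ}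
    (hε : ∀ z, |(∫ ω, ramp z α (W ω) ∂P) - ∫ x, ramp z α x ∂gaussianReal 0 1| ≤ ε) (t : ℝ) :
    |P.real (W ⁻¹' Iic t) - stdGaussCDF t| ≤ ε + α := by
  have := Measure.isProbabilityMeasure_map (μ := P) hW.aemeasurable
  have hmap (z : ℝ) : ∫ x, ramp z α x ∂(P.map W) = ∫ ω, ramp z α (W ω) ∂P :=
    integral_map hW.aemeasurable (continuous_ramp z α).aestronglyMeasurable
  have hreal (z : ℝ) : (P.map W).real (Iic z) = P.real (W ⁻¹' Iic z) :=
    map_measureReal_apply hW measurableSet_Iic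
  have hgauss (z : ℝ) : (gaussianReal 0 1).real (Iic z) = stdGaussCDF z := rfl
  have hupper : P.real (W ⁻¹' Iic t) ≤ stdGaussCDF (t + α) + ε := by
    rw [← hreal, ← hgauss]
    linarith [measureReal_Iic_le_integral_ramp (P.map W) hα t, hmap t,
      integral_ramp_le_measureReal_Iic (gaussianReal 0 1) hα t, (abs_le.1 (hε t)).2]
  have hlower : stdGaussCDF (t - α) - ε ≤ P.real (W ⁻¹' Iic t) := by
    have htop := integral_ramp_le_measureReal_Iic (P.map W) hα (t - α)
    rw [sub_add_cancel, hmap, hreal] at htop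
    rw [← hgauss]
    linarith [measureReal_Iic_le_integral_ramp (gaussianReal 0 1) hα (t - α),
      (abs_le.1 (hε (t - α))).1]
  have hright := stdGaussCDF_sub_le (le_add_of_nonneg_right hα.le : t ≤ t + α)
  have hleft := stdGaussCDF_sub_le (sub_le_self t hα.le)
  exact abs_le.2 ⟨by linarith, by linarith⟩

lemma measureReal_preimage_Ioc_le [IsFiniteMeasure P] (hW : Measurable W) {κ : ℝ}
    (hκ : ∀ t, |P.real (W ⁻¹' Iic t) - stdGaussCDF t| ≤ κ) {a b : ℝ} (hab : a ≤ b) :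
    P.real (W ⁻¹' Ioc a b) ≤ b - a + 2 * κ := by
  rw [← Iic_sdiff_Iic, preimage_sdiff,
    measureReal_sdiff (preimage_mono (Iic_subset_Iic.2 hab)) (hW measurableSet_Iic)]
  linarith [(abs_le.1 (hκ a)).1, (abs_le.1 (hκ b)).2, stdGaussCDF_sub_le hab]

lemma le_two_mul_of_forall_le_half_add {β : Type*} {a : β → ℝ} {E : ℝ}
    (hbdd : BddAbove (range a)) (h : ∀ κ, (∀ t, a t ≤ κ) → ∀ t, a t ≤ κ / 2 + E) (t : β) :
    a t ≤ 2 * E := by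
  have : Nonempty β := ⟨t⟩
  linarith [le_ciSup hbdd t, ciSup_le (h _ (le_ciSup hbdd))]

lemma abs_measureReal_sub_stdGaussCDF_le_one [IsProbabilityMeasure P] (s : Set Ω) (t : ℝ) :
    |P.real s - stdGaussCDF t| ≤ 1 :=
  abs_le.2 ⟨by linarith [stdGaussCDF_le_one t, measureReal_nonneg (μ := P) (s := s)],
    by linarith [stdGaussCDF_nonneg t, measureReal_le_one (μ := P) (s := s)]⟩

theorem IsSteinCoupling.abs_measureReal_sub_stdGaussCDF_le [IsProbabilityMeasure P] [Nonempty ι]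
    (hW : IsSteinCoupling P W W' D δ) (hint : Integrable W P) (hone : ∫ ω, |W ω| ∂P ≤ 1)
    (hδ : 0 < δ) (t : ℝ) :
    |P.real (W ⁻¹' Iic t) - stdGaussCDF t| ≤
      2 * (2 * (∫ ω, |1 - steinFactor W W' D ω| ∂P) + 12 * (Fintype.card ι * δ ^ 3) + δ) := by
  set K : ℝ := Fintype.card ι * δ ^ 3 with hK
  have : (0 : ℝ) < Fintype.card ι := Nat.cast_pos.2 Fintype.card_pos
  have hK0 : 0 < K := by positivity
  -- With `α = 4 * K`, half of any known error bound `κ` is absorbed.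
  have himprove (κ : ℝ) (hκ : ∀ t, |P.real (W ⁻¹' Iic t) - stdGaussCDF t| ≤ κ) (t : ℝ) :
      |P.real (W ⁻¹' Iic t) - stdGaussCDF t| ≤
        κ / 2 + (2 * (∫ ω, |1 - steinFactor W W' D ω| ∂P) + 12 * K + δ) := by
    have hexpand (p : ℝ) : K * (7 + (4 * K)⁻¹ * p) = 7 * K + p / 4 := by field_simp
    have hramp (z : ℝ) :
        |(∫ ω, ramp z (4 * K) (W ω) ∂P) - ∫ x, ramp z (4 * K) x ∂gaussianReal 0 1| ≤
          κ / 2 + 2 * (∫ ω, |1 - steinFactor W W' D ω| ∂P) + 8 * K + δ := by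
      have hbound := hW.abs_integral_ramp_sub_le hint hone hδ (mul_pos four_pos hK0) z
      have hwindow := measureReal_preimage_Ioc_le hW.measurable hκ
        (show z - 2 * δ ≤ z + 4 * K + δ by linarith)
      rw [← hK, hexpand] at hbound
      linarith
    linarith [abs_measureReal_sub_stdGaussCDF_le_of_ramp hW.measurable (mul_pos four_pos hK0)
      hramp t]
  refine le_two_mul_of_forall_le_half_add
    (a := fun t => |P.real (W ⁻¹' Iic t) - stdGaussCDF t|) ⟨1, ?_⟩ himprove t
  rintro _ ⟨t, rfl⟩
  exact abs_measureReal_sub_stdGaussCDF_le_one _ t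

end Smoothing

end SteinCoupling

section Resampling

variable {ι E : Type*}

/-- The second component of a pair if `b` holds, and the first one otherwise. -/
def pick (b : Prop) (p : E × E) : E := if b then p.2 else p.1

/-- The configuration picking the second copy of each coordinate in `s` and the first copy of
every other coordinate. -/
def resample (s : Set ι) (z : ι → E × E) : ι → E := fun i => pick (i ∈ s) (z i)

/-- Exchange of the two copies of each coordinate in `s`. -/
def swapOn (s : Set ι) (z : ι → E × E) : ι → E × E := fun i => if i ∈ s then (z i).swap else z i

lemma resample_swapOn (s t : Set ι) (z : ι → E × E) :
    resample t (swapOn s z) = resample (symmDiff t s) z := by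
  ext i
  by_cases hs : i ∈ s <;> by_cases ht : i ∈ t <;>
    simp [resample, pick, swapOn, mem_symmDiff, hs, ht]

lemma resample_empty (z : ι → E × E) : resample ∅ z = fun i => (z i).1 :=
  funext fun _ => if_neg id

lemma resample_univ (z : ι → E × E) : resample univ z = fun i => (z i).2 :=
  funext fun i => if_pos (mem_univ i)

lemma resample_insert (s : Set ι) (j : ι) (z : ι → E × E) :
    resample (insert j s) z = Function.update (resample s z) j (z j).2 := by
  ext i
  by_cases hij : i = j
  · subst hij; simp [resample, pick]
  · simp [resample, hij]

lemma resample_singleton (j : ι) (z : ι → E × E) :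
    resample {j} z = Function.update (resample ∅ z) j (z j).2 := by
  rw [← resample_insert, insert_empty_eq]

lemma resample_update (s : Set ι) (z : ι → E × E) (i : ι) (e : E × E) :
    resample s (Function.update z i e) =
      Function.update (resample s z) i (pick (i ∈ s) e) := by
  ext k
  by_cases hki : k = i
  · subst hki; simp [resample]
  · simp [resample, hki]

lemma sum_Iio_sub_Iic {n : ℕ} (f : Set (Fin n) → ℝ) :
    ∑ j, (f (Iio j) - f (Iic j)) = f ∅ - f univ := by
  have hIio (j : Fin n) : Iio j = {i : Fin n | i.val < j} := rfl
  have hIic (j : Fin n) : Iic j = {i : Fin n | i.val < j + 1} := by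
    ext i; exact Nat.lt_succ_iff.symm
  simp_rw [hIio, hIic]
  rw [Fin.sum_univ_eq_sum_range
      (fun j : ℕ => f {i : Fin n | i.val < j} - f {i : Fin n | i.val < j + 1}),
    Finset.sum_range_sub' (fun j : ℕ => f {i : Fin n | i.val < j})]
  simp

lemma symmDiff_Iio_singleton {α : Type*} [LinearOrder α] (a : α) :
    symmDiff (Iio a) {a} = Iic a := by
  ext b
  rcases lt_trichotomy b a with hba | rfl | hab
  · simp [mem_symmDiff, hba, hba.le, hba.ne]
  · simp [mem_symmDiff]
  · simp [mem_symmDiff, hab.not_ge, hab.le, hab.ne']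

end Resampling

section ProductMeasure

variable {E : Type*} [MeasurableSpace E] {n : ℕ} (ν : Measure E) [IsProbabilityMeasure ν]

lemma integral_comp_of_measurePreserving {α β : Type*} [MeasurableSpace α] [MeasurableSpace β]
    {μ : Measure α} {μ' : Measure β} {T : α → β} (hT : MeasurePreserving T μ μ') {g : β → ℝ}
    (hg : AEStronglyMeasurable g μ') : ∫ a, g (T a) ∂μ = ∫ b, g b ∂μ' := by
  rw [← hT.map_eq] at hg ⊢
  exact (integral_map hT.measurable.aemeasurable hg).symm

section Fintype

variable {ι : Type*}

lemma measurable_update_prod (k : ι) :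
    Measurable fun p : (ι → E) × E => Function.update p.1 k p.2 :=
  measurable_pi_lambda _ fun i => by
    by_cases hik : i = k
    · subst hik; simpa using measurable_snd
    · simpa only [Function.update_of_ne hik] using! (measurable_pi_apply i).comp measurable_fst

lemma measurable_pick (b : Prop) : Measurable (pick b : E × E → E) := by
  unfold pick
  split_ifs
  exacts [measurable_snd, measurable_fst]

variable [Fintype ι]

lemma measurePreserving_pick (b : Prop) : MeasurePreserving (pick b) (ν.prod ν) ν := by
  by_cases hb : b
  · exact (funext fun _ => if_pos hb : pick b = Prod.snd (α := E) (β := E)) ▸ measurePreserving_snd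
  · exact (funext fun _ => if_neg hb : pick b = Prod.fst (α := E) (β := E)) ▸ measurePreserving_fst

lemma measurePreserving_resample (s : Set ι) :
    MeasurePreserving (resample s) (.pi fun _ : ι => ν.prod ν) (.pi fun _ => ν) :=
  measurePreserving_pi (fun _ : ι => ν.prod ν) (fun _ => ν) fun i =>
    measurePreserving_pick ν (i ∈ s)

lemma measurePreserving_swapOn (s : Set ι) :
    MeasurePreserving (swapOn s) (.pi fun _ : ι => ν.prod ν) (.pi fun _ => ν.prod ν) :=
  measurePreserving_pi (fun _ : ι => ν.prod ν) (fun _ => ν.prod ν)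
    (f := fun i (e : E × E) => if i ∈ s then e.swap else e) fun i => by
      by_cases hi : i ∈ s
      · simpa only [hi, if_true] using Measure.measurePreserving_swap
      · simpa only [hi, if_false] using! MeasurePreserving.id _

lemma measurePreserving_update (k : ι) :
    MeasurePreserving (fun p : (ι → E) × E => Function.update p.1 k p.2)
      ((Measure.pi fun _ => ν).prod ν) (.pi fun _ => ν) := by
  refine ⟨measurable_update_prod k, ?_⟩
  have hsplit := (MeasurePreserving.id (.pi fun _ : ι => ν)).prod
    (measurePreserving_eval (fun _ : ι => ν) k) |>.comp
      (measurePreserving_arrowProdEquivProdArrow E E ι (fun _ => ν) fun _ => ν)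
  rw [← hsplit.map_eq, Measure.map_map (measurable_update_prod k) hsplit.measurable]
  convert (measurePreserving_resample ν {k}).map_eq using 2
  ext1 z
  rw [resample_singleton, resample_empty]
  rfl

end Fintype

variable {ν} {g f : (Fin n → E) → ℝ}

local notation "νⁿ" => Measure.pi fun _ : Fin n => ν
local notation "ν²ⁿ" => Measure.pi fun _ : Fin n => ν.prod ν

lemma memLp_comp_resample {p : ℝ≥0∞} (hg : MemLp g p νⁿ) (s : Set (Fin n)) :
    MemLp (fun z => g (resample s z)) p ν²ⁿ :=
  hg.comp_measurePreserving (measurePreserving_resample ν s)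

lemma integrable_mul_comp_resample (hg : MemLp g 2 νⁿ) (hf : MemLp f 2 νⁿ) (s t : Set (Fin n)) :
    Integrable (fun z => g (resample s z) * f (resample t z)) ν²ⁿ :=
  (memLp_comp_resample hg s).integrable_mul (memLp_comp_resample hf t)

lemma integral_mul_comp_resample_symmDiff (hg : MemLp g 2 νⁿ) (hf : MemLp f 2 νⁿ)
    (s t u : Set (Fin n)) :
    ∫ z, g (resample (symmDiff s u) z) * f (resample (symmDiff t u) z) ∂ν²ⁿ =
      ∫ z, g (resample s z) * f (resample t z) ∂ν²ⁿ := by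
  simp_rw [← resample_swapOn]
  exact integral_comp_of_measurePreserving (measurePreserving_swapOn ν u)
    (integrable_mul_comp_resample hg hf s t).aestronglyMeasurable

lemma integral_mul_comp_resample_univ_empty (hg : MemLp g 2 νⁿ) (hf : MemLp f 2 νⁿ) :
    ∫ z, g (resample univ z) * f (resample ∅ z) ∂ν²ⁿ = (∫ x, g x ∂νⁿ) * ∫ x, f x ∂νⁿ := by
  rw [mul_comm (∫ x, g x ∂νⁿ), ← integral_prod_mul, ← integral_comp_of_measurePreserving
    (measurePreserving_arrowProdEquivProdArrow E E (Fin n) (fun _ => ν) fun _ => ν)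
    ((hf.integrable one_le_two).mul_prod (hg.integrable one_le_two)).aestronglyMeasurable]
  refine integral_congr_ae (.of_forall fun z => ?_)
  dsimp only
  rw [resample_univ, resample_empty]
  exact mul_comm _ _

/-- Swapping the copies of coordinate `j` turns `f (resample ∅ z)` into `f (resample {j} z)` and
exchanges `Iio j` with `Iic j`, after which the sum telescopes. -/
theorem covariance_eq_sum_resample (hg : MemLp g 2 νⁿ) (hf : MemLp f 2 νⁿ) :
    cov[g, f; νⁿ] = ∑ j, 1 / 2 * ∫ z, (g (resample (Iio j) z) - g (resample (Iic j) z)) *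
      (f (resample ∅ z) - f (resample {j} z)) ∂ν²ⁿ := by
  set I : Set (Fin n) → Set (Fin n) → ℝ :=
    fun s t => ∫ z, g (resample s z) * f (resample t z) ∂ν²ⁿ with hI
  have hint := integrable_mul_comp_resample hg hf
  have hexpand (j : Fin n) : ∫ z, (g (resample (Iio j) z) - g (resample (Iic j) z)) *
      (f (resample ∅ z) - f (resample {j} z)) ∂ν²ⁿ =
        (I (Iio j) ∅ - I (Iic j) ∅) - (I (Iio j) {j} - I (Iic j) {j}) := by
    rw [hI, ← integral_sub (hint _ _) (hint _ _), ← integral_sub (hint _ _) (hint _ _),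
      ← integral_sub ((hint _ _).sub' (hint _ _)) ((hint _ _).sub' (hint _ _))]
    exact integral_congr_ae (.of_forall fun z => by ring)
  have hswap (j : Fin n) : I (Iio j) {j} = I (Iic j) ∅ ∧ I (Iic j) {j} = I (Iio j) ∅ := by
    have hIic : symmDiff (Iic j) {j} = Iio j := by
      rw [← symmDiff_Iio_singleton, symmDiff_symmDiff_cancel_right]
    constructor
    · simpa [symmDiff_Iio_singleton] using
        (integral_mul_comp_resample_symmDiff hg hf (Iio j) {j} {j}).symm
    · simpa [hIic] using (integral_mul_comp_resample_symmDiff hg hf (Iic j) {j} {j}).symm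
  have hself : I ∅ ∅ = ∫ x, g x * f x ∂νⁿ :=
    integral_comp_of_measurePreserving (measurePreserving_resample ν ∅)
      (hg.integrable_mul hf).aestronglyMeasurable
  calc cov[g, f; νⁿ] = I ∅ ∅ - I univ ∅ := by
        rw [covariance_eq_sub hg hf, hself, ← integral_mul_comp_resample_univ_empty hg hf]; rfl
    _ = ∑ j, (I (Iio j) ∅ - I (Iic j) ∅) := (sum_Iio_sub_Iic fun s => I s ∅).symm
    _ = _ := Finset.sum_congr rfl fun j _ => by rw [hexpand, (hswap j).1, (hswap j).2]; ring

lemma integral_sub_resample_sq_symmDiff (hg : MemLp g 2 νⁿ) (s t u : Set (Fin n)) :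
    ∫ z, (g (resample (symmDiff s u) z) - g (resample (symmDiff t u) z)) ^ 2 ∂ν²ⁿ =
      ∫ z, (g (resample s z) - g (resample t z)) ^ 2 ∂ν²ⁿ := by
  simp_rw [← resample_swapOn]
  exact integral_comp_of_measurePreserving (measurePreserving_swapOn ν u)
    ((memLp_comp_resample hg s).sub (memLp_comp_resample hg t)).integrable_sq.aestronglyMeasurable

/-- The Efron–Stein inequality. -/
theorem variance_le_sum_resample (hg : MemLp g 2 νⁿ) :
    Var[g; νⁿ] ≤ ∑ j, 1 / 2 * ∫ z, (g (resample ∅ z) - g (resample {j} z)) ^ 2 ∂ν²ⁿ := by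
  rw [← covariance_self hg.aemeasurable, covariance_eq_sum_resample hg hg]
  refine Finset.sum_le_sum fun j _ => mul_le_mul_of_nonneg_left ?_ one_half_pos.le
  have hdiff (s t : Set (Fin n)) : MemLp (fun z => g (resample s z) - g (resample t z)) 2 ν²ⁿ :=
    (memLp_comp_resample hg s).sub (memLp_comp_resample hg t)
  have hsq : ∫ z, (g (resample (Iio j) z) - g (resample (Iic j) z)) ^ 2 ∂ν²ⁿ =
      ∫ z, (g (resample ∅ z) - g (resample {j} z)) ^ 2 ∂ν²ⁿ := by
    rw [← integral_sub_resample_sq_symmDiff hg (Iio j) (Iic j) (Iio j), symmDiff_self,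
      ← symmDiff_Iio_singleton, symmDiff_comm (Iio j) {j}, symmDiff_symmDiff_cancel_right]
    rfl
  calc ∫ z, (g (resample (Iio j) z) - g (resample (Iic j) z)) *
        (g (resample ∅ z) - g (resample {j} z)) ∂ν²ⁿ
    _ ≤ ∫ z, 1 / 2 * ((g (resample (Iio j) z) - g (resample (Iic j) z)) ^ 2 +
          (g (resample ∅ z) - g (resample {j} z)) ^ 2) ∂ν²ⁿ :=
        integral_mono ((hdiff _ _).integrable_mul (hdiff _ _))
          (((hdiff _ _).integrable_sq.add (hdiff _ _).integrable_sq).const_mul _) fun z => by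
          dsimp only
          linarith [two_mul_le_add_sq (g (resample (Iio j) z) - g (resample (Iic j) z))
            (g (resample ∅ z) - g (resample {j} z))]
    _ = ∫ z, (g (resample ∅ z) - g (resample {j} z)) ^ 2 ∂ν²ⁿ := by
        rw [integral_const_mul, integral_add (hdiff _ _).integrable_sq (hdiff _ _).integrable_sq,
          hsq]
        ring

end ProductMeasure

section LocalFunctional

variable {ι E : Type*}

/-- Changing one coordinate of the argument changes the value of `g` by at most `c`. -/
def HasBoundedDifferences (g : (ι → E) → ℝ) (c : ℝ) : Prop :=
  ∀ X i y, |g X - g (Function.update X i y)| ≤ c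

/-- The effect on `g` of changing the coordinate `j` does not depend on the coordinate `i` as long
as neither value of the latter is `Q`-related to either value of the former. -/
def HasLocalDifferences (Q : E → E → Prop) (g : (ι → E) → ℝ) : Prop :=
  ∀ (X : ι → E) (i j : ι) (y u : E), i ≠ j →
    (∀ a ∈ ({X i, y} : Set E), ∀ b ∈ ({X j, u} : Set E), ¬ Q a b) →
      g (Function.update X i y) - g (Function.update (Function.update X i y) j u) =
        g X - g (Function.update X j u)

variable {g : (ι → E) → ℝ} {c δ : ℝ} {Q : E → E → Prop}

lemma HasBoundedDifferences.sub_const_div (hg : HasBoundedDifferences g c) (m : ℝ) {σ : ℝ}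
    (hσ : 0 < σ) : HasBoundedDifferences (fun X => (g X - m) / σ) (c / σ) := fun X i y => by
  simpa only [← sub_div, sub_sub_sub_cancel_right, abs_div, abs_of_pos hσ] using
    div_le_div_of_nonneg_right (hg X i y) hσ.le

lemma HasLocalDifferences.sub_const_div (hg : HasLocalDifferences Q g) (m σ : ℝ) :
    HasLocalDifferences Q fun X => (g X - m) / σ := fun X i j y u hij hfar => by
  simp only [← sub_div, sub_sub_sub_cancel_right, hg X i j y u hij hfar]

lemma HasBoundedDifferences.abs_sub_resample_insert_le (hg : HasBoundedDifferences g c) (s : Set ι)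
    (j : ι) (z : ι → E × E) : |g (resample s z) - g (resample (insert j s) z)| ≤ c :=
  resample_insert s j z ▸ hg _ j _

lemma HasBoundedDifferences.abs_sub_resample_singleton_le (hg : HasBoundedDifferences g c)
    (j : ι) (z : ι → E × E) : |g (resample ∅ z) - g (resample {j} z)| ≤ c :=
  resample_singleton j z ▸ hg _ j _

lemma HasLocalDifferences.sub_resample_insert (hg : HasLocalDifferences Q g) {i j : ι} (hij : i ≠ j)
    {s : Set ι} {z : ι → E × E} {e : E × E}
    (hold : ∀ b b', ¬ Q (pick b (z i)) (pick b' (z j)))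
    (hnew : ∀ b b', ¬ Q (pick b e) (pick b' (z j))) :
    g (resample s (Function.update z i e)) - g (resample (insert j s) (Function.update z i e)) =
      g (resample s z) - g (resample (insert j s) z) := by
  have hsnd : (z j).2 = pick True (z j) := (if_pos trivial).symm
  rw [resample_insert, resample_insert, resample_update, Function.update_of_ne hij.symm]
  refine hg _ i j _ _ hij fun a ha b hb => ?_
  rw [hsnd] at hb
  rcases ha with rfl | rfl <;> rcases hb with rfl | rfl
  exacts [hold _ _, hold _ _, hnew _ _, hnew _ _]

variable {n : ℕ} {w : (Fin n → E) → ℝ}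

/-- The weight of coordinate `j` in the Stein coupling obtained by resampling; the sets `Iio j`
and `Iic j` interpolate between a configuration and an independent copy of it. -/
def resampleWeight (w : (Fin n → E) → ℝ) (j : Fin n) (z : Fin n → E × E) : ℝ :=
  1 / 2 * (w (resample (Iio j) z) - w (resample (Iic j) z))

/-- The Stein factor of the coupling obtained by resampling. -/
def resampleFactor (w : (Fin n → E) → ℝ) : (Fin n → E × E) → ℝ :=
  steinFactor (fun z => w (resample ∅ z)) (fun j z => w (resample {j} z)) (resampleWeight w)

lemma HasBoundedDifferences.abs_resampleWeight_le (hw : HasBoundedDifferences w δ) (j : Fin n)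
    (z : Fin n → E × E) : |resampleWeight w j z| ≤ δ / 2 := by
  rw [resampleWeight, abs_mul, abs_of_pos one_half_pos, ← Iio_insert]
  linarith [hw.abs_sub_resample_insert_le (Iio j) j z]

lemma HasBoundedDifferences.abs_resampleFactor_term_le (hw : HasBoundedDifferences w δ) (j : Fin n)
    (z : Fin n → E × E) :
    |resampleWeight w j z * (w (resample ∅ z) - w (resample {j} z))| ≤ δ ^ 2 / 2 := by
  rw [abs_mul]
  have hδ : 0 ≤ δ / 2 := (abs_nonneg _).trans (hw.abs_resampleWeight_le j z)
  exact (mul_le_mul (hw.abs_resampleWeight_le j z) (hw.abs_sub_resample_singleton_le j z)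
    (abs_nonneg _) hδ).trans_eq (by ring)

lemma HasBoundedDifferences.abs_resampleFactor_le (hw : HasBoundedDifferences w δ)
    (z : Fin n → E × E) : |resampleFactor w z| ≤ n * (δ ^ 2 / 2) := by
  calc |resampleFactor w z|
    _ ≤ ∑ j, |resampleWeight w j z * (w (resample ∅ z) - w (resample {j} z))| := by
        unfold resampleFactor steinFactor; exact Finset.abs_sum_le_sum_abs _ _
    _ ≤ ∑ _j : Fin n, δ ^ 2 / 2 := Finset.sum_le_sum fun j _ => hw.abs_resampleFactor_term_le j z
    _ = n * (δ ^ 2 / 2) := by simp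

/-- Some point among the four of `z` is `Q`-related to a point of the first pair of `z'`. -/
def QuadRel (Q : E → E → Prop) (z z' : (E × E) × (E × E)) : Prop :=
  ∃ b₁ b₂ b₃ : Prop, Q (pick b₁ (pick b₂ z)) (pick b₃ (pick False z'))

/-- The coordinate `j ≠ i` is `Q`-related to the coordinate `i`. -/
def relatedSet (Q : E → E → Prop) (i j : ι) : Set (ι → E) := {z | j ≠ i ∧ Q (z i) (z j)}

/-- The number of coordinates `Q`-related to the coordinate `i`. -/
def relatedCount [Fintype ι] (Q : E → E → Prop) (i : ι) (z : ι → E) : ℝ :=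
  ∑ j, (relatedSet Q i j).indicator 1 z

lemma relatedCount_nonneg [Fintype ι] (i : ι) (X : ι → E) : 0 ≤ relatedCount Q i X :=
  Finset.sum_nonneg fun _ _ => indicator_nonneg (fun _ _ => zero_le_one) _

lemma relatedCount_le_card [Fintype ι] (i : ι) (X : ι → E) :
    relatedCount Q i X ≤ Fintype.card ι :=
  (Finset.sum_le_card_nsmul _ _ (1 : ℝ) fun _ _ =>
    indicator_le_self' (fun _ _ => zero_le_one) X).trans_eq (by simp)

lemma HasLocalDifferences.resampleFactor_term_resample_singleton (hw : HasLocalDifferences Q w)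
    {i j : Fin n} (hij : i ≠ j) {z : Fin n → (E × E) × (E × E)} (hrel : ¬ QuadRel Q (z i) (z j)) :
    resampleWeight w j (resample {i} z) *
        (w (resample ∅ (resample {i} z)) - w (resample {j} (resample {i} z))) =
      resampleWeight w j (resample ∅ z) *
        (w (resample ∅ (resample ∅ z)) - w (resample {j} (resample ∅ z))) := by
  have hfst (k : Fin n) : resample ∅ z k = pick False (z k) := by
    rw [resample_empty]; exact (if_neg id).symm
  have hsnd : (z i).2 = pick True (z i) := (if_pos trivial).symm
  have hsub (s : Set (Fin n)) :=
    hw.sub_resample_insert (s := s) (z := resample ∅ z) (e := (z i).2) hij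
      (fun b b' hQ => hrel ⟨b, False, b', by rwa [hfst, hfst] at hQ⟩)
      (fun b b' hQ => hrel ⟨b, True, b', by rwa [hfst, hsnd] at hQ⟩)
  simp only [← resample_singleton] at hsub
  rw [resampleWeight, resampleWeight, ← Iio_insert, hsub, ← insert_empty_eq j, hsub]

lemma abs_resampleFactor_sub_le (hw : HasBoundedDifferences w δ) (hloc : HasLocalDifferences Q w)
    (i : Fin n) (z : Fin n → (E × E) × (E × E)) :
    |resampleFactor w (resample ∅ z) - resampleFactor w (resample {i} z)| ≤
      δ ^ 2 * (1 + relatedCount (QuadRel Q) i z) := by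
  set Z := resample ∅ z
  set t : Fin n → (Fin n → E × E) → ℝ :=
    fun j Y => resampleWeight w j Y * (w (resample ∅ Y) - w (resample {j} Y))
  have hterm (j : Fin n) : |t j Z - t j (resample {i} z)| ≤
      δ ^ 2 * ((if j = i then 1 else 0) + (relatedSet (QuadRel Q) i j).indicator 1 z) := by
    have hle : |t j Z - t j (resample {i} z)| ≤ δ ^ 2 := (abs_sub _ _).trans <| by
      linarith [hw.abs_resampleFactor_term_le j Z, hw.abs_resampleFactor_term_le j (resample {i} z)]
    by_cases hji : j = i
    · simpa [hji, relatedSet] using hji ▸ hle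
    by_cases hrel : QuadRel Q (z i) (z j)
    · simpa [hji, hrel, relatedSet] using hle
    have heq : t j (resample {i} z) = t j Z :=
      hloc.resampleFactor_term_resample_singleton (Ne.symm hji) hrel
    simp [heq, hji, hrel, relatedSet]
  calc |resampleFactor w Z - resampleFactor w (resample {i} z)|
    _ = |∑ j, (t j Z - t j (resample {i} z))| := by rw [Finset.sum_sub_distrib]; rfl
    _ ≤ ∑ j, |t j Z - t j (resample {i} z)| := Finset.abs_sum_le_sum_abs _ _
    _ ≤ _ := Finset.sum_le_sum fun j _ => hterm j
    _ = δ ^ 2 * (1 + relatedCount (QuadRel Q) i z) := by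
        rw [← Finset.mul_sum, Finset.sum_add_distrib, relatedCount]; simp

end LocalFunctional

section Moments

variable {Ω : Type*} [MeasurableSpace Ω] {P : Measure Ω}

lemma integral_abs_sub_integral_le_sqrt_variance [IsProbabilityMeasure P] {X : Ω → ℝ}
    (hX : MemLp X 2 P) : ∫ ω, |X ω - P[X]| ∂P ≤ √(Var[X; P]) := by
  have habs : MemLp (fun ω => |X ω - P[X]|) 2 P := (hX.sub (memLp_const _)).abs
  refine Real.le_sqrt_of_sq_le ?_
  have hvar := variance_eq_sub habs ▸ variance_nonneg _ P
  rw [variance_eq_integral hX.aemeasurable]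
  simpa [sq_abs] using hvar

lemma integral_sum_indicator_sq [IsFiniteMeasure P] {ι : Type*} [Fintype ι] {A : ι → Set Ω}
    (hA : ∀ i, MeasurableSet (A i)) :
    ∫ ω, (∑ i, (A i).indicator 1 ω : ℝ) ^ 2 ∂P = ∑ i, ∑ j, P.real (A i ∩ A j) := by
  have hmul (i j : ι) (ω : Ω) : ((A i).indicator 1 ω * (A j).indicator 1 ω : ℝ) =
      (A i ∩ A j).indicator 1 ω := by rw [inter_indicator_one]; rfl
  have hint (i j : ι) : Integrable ((A i ∩ A j).indicator (1 : Ω → ℝ)) P :=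
    (integrable_const 1).indicator ((hA i).inter (hA j))
  simp_rw [sq, Finset.sum_mul_sum, hmul]
  rw [integral_finsetSum _ fun i _ => integrable_finsetSum _ fun j _ => hint i j]
  refine Finset.sum_congr rfl fun i _ => ?_
  rw [integral_finsetSum _ fun j _ => hint i j]
  exact Finset.sum_congr rfl fun j _ => integral_indicator_one ((hA i).inter (hA j))

end Moments

section Related

variable {E ι : Type*} [MeasurableSpace E] {ν : Measure E} [IsProbabilityMeasure ν]
  {Q : E → E → Prop} {q : ℝ}

lemma measurableSet_relatedSet (hQ : MeasurableSet {p : E × E | Q p.1 p.2}) (i j : ι) :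
    MeasurableSet (relatedSet Q i j) :=
  have hpair : Measurable fun X : ι → E => (X i, X j) :=
    (measurable_pi_apply i).prodMk (measurable_pi_apply j)
  (MeasurableSet.const (j ≠ i)).inter (hpair hQ)

variable [Fintype ι]

local notation "ν^ι" => Measure.pi fun _ : ι => ν

lemma measure_pi_eq_lintegral_update (k : ι) {A : Set (ι → E)} (hA : MeasurableSet A) :
    ν^ι A = ∫⁻ X, ν {y | Function.update X k y ∈ A} ∂ν^ι := by
  rw [← (measurePreserving_update ν k).measure_preimage hA.nullMeasurableSet,
    Measure.prod_apply (measurable_update_prod k hA)]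
  rfl

lemma measureReal_relatedSet_inter_le (hQ : MeasurableSet {p : E × E | Q p.1 p.2})
    (hq : ∀ x, ν.real {y | Q x y} ≤ q) (i j : ι) {B : Set (ι → E)} (hB : MeasurableSet B)
    (hBj : ∀ X y, Function.update X j y ∈ B → X ∈ B) :
    (ν^ι).real (relatedSet Q i j ∩ B) ≤ q * (ν^ι).real B := by
  have hsection (X : ι → E) : ν {y | Function.update X j y ∈ relatedSet Q i j ∩ B} ≤
      B.indicator (fun _ => ENNReal.ofReal q) X := by
    by_cases hX : X ∈ B
    · rw [indicator_of_mem hX, ← ofReal_measureReal]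
      refine ENNReal.ofReal_le_ofReal ((measureReal_mono ?_).trans (hq (X i)))
      rintro y ⟨⟨hji, hy⟩, -⟩
      simpa [Function.update_of_ne hji.symm] using hy
    · have hempty : {y | Function.update X j y ∈ relatedSet Q i j ∩ B} = ∅ :=
        eq_empty_of_forall_notMem fun y hy => hX (hBj X y hy.2)
      rw [hempty, measure_empty]
      exact zero_le
  have hle : ν^ι (relatedSet Q i j ∩ B) ≤ ENNReal.ofReal q * ν^ι B := by
    rw [measure_pi_eq_lintegral_update j ((measurableSet_relatedSet hQ i j).inter hB),
      ← lintegral_indicator_const hB]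
    exact lintegral_mono hsection
  have hq₀ : 0 ≤ q := by
    obtain ⟨x⟩ := nonempty_of_isProbabilityMeasure ν
    exact measureReal_nonneg.trans (hq x)
  simpa [Measure.real, ENNReal.toReal_mul, hq₀] using
    ENNReal.toReal_mono (ENNReal.mul_ne_top ENNReal.ofReal_ne_top (measure_ne_top _ _)) hle

lemma measureReal_relatedSet_le (hQ : MeasurableSet {p : E × E | Q p.1 p.2})
    (hq : ∀ x, ν.real {y | Q x y} ≤ q) (i j : ι) : (ν^ι).real (relatedSet Q i j) ≤ q := by
  simpa using measureReal_relatedSet_inter_le hQ hq i j .univ fun _ _ _ => mem_univ _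

lemma measureReal_relatedSet_inter_relatedSet_le (hQ : MeasurableSet {p : E × E | Q p.1 p.2})
    (hq : ∀ x, ν.real {y | Q x y} ≤ q) (i : ι) {j l : ι} (hjl : j ≠ l) :
    (ν^ι).real (relatedSet Q i j ∩ relatedSet Q i l) ≤ q ^ 2 := by
  obtain ⟨x⟩ := nonempty_of_isProbabilityMeasure ν
  have hq₀ : 0 ≤ q := measureReal_nonneg.trans (hq x)
  rcases eq_or_ne j i with rfl | hji
  · simpa [relatedSet] using sq_nonneg q
  rw [sq]
  refine (measureReal_relatedSet_inter_le hQ hq i j (measurableSet_relatedSet hQ i l)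
    fun X y hX => ?_).trans (mul_le_mul_of_nonneg_left (measureReal_relatedSet_le hQ hq i l) hq₀)
  simpa [relatedSet, Function.update_of_ne hji.symm, Function.update_of_ne hjl.symm] using hX

lemma measurable_relatedCount (hQ : MeasurableSet {p : E × E | Q p.1 p.2}) (i : ι) :
    Measurable (relatedCount Q i) :=
  Finset.measurable_sum _ fun j _ => measurable_one.indicator (measurableSet_relatedSet hQ i j)

lemma integral_relatedCount_sq_le (hQ : MeasurableSet {p : E × E | Q p.1 p.2})
    (hq : ∀ x, ν.real {y | Q x y} ≤ q) (i : ι) :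
    ∫ X, relatedCount Q i X ^ 2 ∂ν^ι ≤ Fintype.card ι * q + (Fintype.card ι * q) ^ 2 := by
  have hterm (j l : ι) : (ν^ι).real (relatedSet Q i j ∩ relatedSet Q i l) ≤
      (if l = j then q else 0) + q ^ 2 := by
    rcases eq_or_ne l j with rfl | hlj
    · simpa using (measureReal_relatedSet_le hQ hq i l).trans (le_add_of_nonneg_right (sq_nonneg q))
    · simpa [hlj] using measureReal_relatedSet_inter_relatedSet_le hQ hq i hlj.symm
  calc ∫ X, relatedCount Q i X ^ 2 ∂ν^ι
    _ = ∑ j, ∑ l, (ν^ι).real (relatedSet Q i j ∩ relatedSet Q i l) :=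
        integral_sum_indicator_sq (measurableSet_relatedSet hQ i)
    _ ≤ ∑ j, ∑ l : ι, ((if l = j then q else 0) + q ^ 2) :=
        Finset.sum_le_sum fun j _ => Finset.sum_le_sum fun l _ => hterm j l
    _ = Fintype.card ι * q + (Fintype.card ι * q) ^ 2 := by
        simp [Finset.sum_add_distrib]; ring

lemma measurableSet_quadRel (hQ : MeasurableSet {p : E × E | Q p.1 p.2}) :
    MeasurableSet {p : ((E × E) × (E × E)) × ((E × E) × (E × E)) | QuadRel Q p.1 p.2} := by
  have hunion : {p : ((E × E) × (E × E)) × ((E × E) × (E × E)) | QuadRel Q p.1 p.2} =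
      ⋃ b : Prop × Prop × Prop,
        {p | Q (pick b.1 (pick b.2.1 p.1)) (pick b.2.2 (pick False p.2))} := by
    ext p; simp [QuadRel]
  rw [hunion]
  refine .iUnion fun b => ?_
  exact (((measurable_pick _).comp ((measurable_pick _).comp measurable_fst)).prodMk
    ((measurable_pick _).comp ((measurable_pick _).comp measurable_snd))) hQ

lemma measureReal_quadRel_le (hQ : MeasurableSet {p : E × E | Q p.1 p.2})
    (hq : ∀ x, ν.real {y | Q x y} ≤ q) (z : (E × E) × (E × E)) :
    ((ν.prod ν).prod (ν.prod ν)).real {z' | QuadRel Q z z'} ≤ 8 * q := by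
  have hunion : {z' | QuadRel Q z z'} = ⋃ b : Prop × Prop × Prop,
      {z' | Q (pick b.1 (pick b.2.1 z)) (pick b.2.2 (pick False z'))} := by
    ext z'; simp [QuadRel]
  have hpart (b : Prop × Prop × Prop) : ((ν.prod ν).prod (ν.prod ν)).real
      {z' | Q (pick b.1 (pick b.2.1 z)) (pick b.2.2 (pick False z'))} ≤ q := by
    have hmeas : MeasurableSet {y | Q (pick b.1 (pick b.2.1 z)) y} := measurable_prodMk_left hQ
    have hpres := (measurePreserving_pick ν b.2.2).comp (measurePreserving_pick (ν.prod ν) False)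
    exact (hpres.measureReal_preimage hmeas.nullMeasurableSet).trans_le (hq _)
  rw [hunion]
  refine (measureReal_iUnion_fintype_le _).trans ?_
  refine (Finset.sum_le_card_nsmul _ _ q fun b _ => hpart b).trans_eq ?_
  simp

end Related

section LocalBerryEsseen

variable {E : Type*} [MeasurableSpace E] {n : ℕ} {ν : Measure E} [IsProbabilityMeasure ν]
  {w g : (Fin n → E) → ℝ} {δ c σ q : ℝ} {Q : E → E → Prop}

local notation "νⁿ" => Measure.pi fun _ : Fin n => ν
local notation "ν²ⁿ" => Measure.pi fun _ : Fin n => ν.prod ν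

lemma measurable_comp_resample (hw : Measurable w) (s : Set (Fin n)) :
    Measurable fun z => w (resample s z) :=
  hw.comp (measurable_pi_lambda _ fun i => (measurable_pick _).comp (measurable_pi_apply i))

lemma isSteinCoupling_resample (hw : Measurable w) (hL2 : MemLp w 2 νⁿ) (hmean : ∫ X, w X ∂νⁿ = 0)
    (hbd : HasBoundedDifferences w δ) :
    IsSteinCoupling ν²ⁿ (fun z => w (resample ∅ z)) (fun j z => w (resample {j} z))
      (resampleWeight w) δ where
  measurable := measurable_comp_resample hw ∅
  measurable_perturbed j := measurable_comp_resample hw {j}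
  measurable_weight j :=
    ((measurable_comp_resample hw (Iio j)).sub (measurable_comp_resample hw (Iic j))).const_mul _
  abs_sub_le := hbd.abs_sub_resample_singleton_le
  abs_weight_le j z := by
    linarith [hbd.abs_resampleWeight_le j z, abs_nonneg (resampleWeight w j z)]
  integral_mul_comp F C hF hC := by
    have hFw : MemLp (F ∘ w) 2 νⁿ :=
      .of_bound (hF.comp hw).aestronglyMeasurable C (.of_forall fun X => hC (w X))
    calc ∫ z, w (resample ∅ z) * F (w (resample ∅ z)) ∂ν²ⁿ
      _ = ∫ X, w X * F (w X) ∂νⁿ :=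
          integral_comp_of_measurePreserving (measurePreserving_resample ν ∅)
            (hw.mul (hF.comp hw)).aestronglyMeasurable
      _ = cov[w, F ∘ w; νⁿ] := by
          rw [covariance_eq_sub hL2 hFw, hmean, zero_mul, sub_zero]; rfl
      _ = _ := by
          rw [covariance_eq_sum_resample hL2 hFw]
          refine Finset.sum_congr rfl fun j _ => ?_
          simp_rw [resampleWeight, ← integral_const_mul, mul_assoc]
          rfl

lemma integral_resampleFactor (hL2 : MemLp w 2 νⁿ) :
    ∫ z, resampleFactor w z ∂ν²ⁿ = Var[w; νⁿ] := by
  have hint (j : Fin n) : Integrable (fun z => resampleWeight w j z *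
      (w (resample ∅ z) - w (resample {j} z))) ν²ⁿ :=
    (((memLp_comp_resample hL2 (Iio j)).sub (memLp_comp_resample hL2 (Iic j))).const_mul
      (1 / 2)).integrable_mul ((memLp_comp_resample hL2 ∅).sub (memLp_comp_resample hL2 {j}))
  rw [← covariance_self hL2.aemeasurable, covariance_eq_sum_resample hL2 hL2]
  unfold resampleFactor steinFactor
  rw [integral_finsetSum _ fun j _ => hint j]
  refine Finset.sum_congr rfl fun j _ => ?_
  simp_rw [resampleWeight, ← integral_const_mul, mul_assoc]

lemma measurable_resampleFactor (hw : Measurable w) : Measurable (resampleFactor w) := by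
  have hsub (s t : Set (Fin n)) :
      Measurable fun z : Fin n → E × E => w (resample s z) - w (resample t z) :=
    (measurable_comp_resample hw s).sub (measurable_comp_resample hw t)
  have hweight (j : Fin n) : Measurable (resampleWeight w j) := (hsub (Iio j) (Iic j)).const_mul _
  unfold resampleFactor steinFactor
  exact Finset.measurable_sum _ fun j _ => (hweight j).mul (hsub ∅ {j})

lemma variance_resampleFactor_le (hw : Measurable w) (hbd : HasBoundedDifferences w δ)
    (hloc : HasLocalDifferences Q w) (hQ : MeasurableSet {p : E × E | Q p.1 p.2})
    (hq : ∀ x, ν.real {y | Q x y} ≤ q) :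
    Var[resampleFactor w; ν²ⁿ] ≤ n * δ ^ 4 * (1 + 8 * n * q + (8 * n * q) ^ 2) := by
  have hL2 : MemLp (resampleFactor w) 2 ν²ⁿ :=
    .of_bound (measurable_resampleFactor hw).aestronglyMeasurable _
      (.of_forall hbd.abs_resampleFactor_le)
  have hcount (i : Fin n) := integral_relatedCount_sq_le (measurableSet_quadRel hQ)
    (measureReal_quadRel_le hQ hq) i
  refine (variance_le_sum_resample hL2).trans
    ((Finset.sum_le_card_nsmul _ _ (δ ^ 4 * (1 + 8 * n * q + (8 * n * q) ^ 2))
      fun i _ => ?_).trans_eq (by simp [mul_assoc]))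
  set N := relatedCount (QuadRel Q) i
  have hNsq : Integrable (fun z => N z ^ 2) (.pi fun _ => (ν.prod ν).prod (ν.prod ν)) :=
    .of_bound ((measurable_relatedCount (measurableSet_quadRel hQ) i).pow_const
      2).aestronglyMeasurable (n ^ 2) (.of_forall fun z => by
        simpa using pow_le_pow_left₀ (relatedCount_nonneg i z) (relatedCount_le_card i z) 2)
  have hpoint (z) : (resampleFactor w (resample ∅ z) - resampleFactor w (resample {i} z)) ^ 2 ≤
      2 * δ ^ 4 * (1 + N z ^ 2) := by
    have hsq := sq_le_sq' (by linarith [neg_abs_le (resampleFactor w (resample ∅ z) -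
      resampleFactor w (resample {i} z)), abs_resampleFactor_sub_le hbd hloc i z])
      ((le_abs_self _).trans (abs_resampleFactor_sub_le hbd hloc i z))
    nlinarith [mul_nonneg (sq_nonneg (δ ^ 2)) (sq_nonneg (1 - N z))]
  calc 1 / 2 * ∫ z, (resampleFactor w (resample ∅ z) - resampleFactor w (resample {i} z)) ^ 2
        ∂(.pi fun _ => (ν.prod ν).prod (ν.prod ν))
    _ ≤ 1 / 2 * ∫ z, 2 * δ ^ 4 * (1 + N z ^ 2) ∂(.pi fun _ => (ν.prod ν).prod (ν.prod ν)) :=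
        mul_le_mul_of_nonneg_left (integral_mono
          ((memLp_comp_resample hL2 ∅).sub (memLp_comp_resample hL2 {i})).integrable_sq
          (((integrable_const 1).add hNsq).const_mul _) hpoint) one_half_pos.le
    _ = δ ^ 4 * (1 + ∫ z, N z ^ 2 ∂(.pi fun _ => (ν.prod ν).prod (ν.prod ν))) := by
        rw [integral_const_mul, integral_add (integrable_const 1) hNsq]; simp; ring
    _ ≤ δ ^ 4 * (1 + 8 * n * q + (8 * n * q) ^ 2) := by
        rw [add_assoc]
        refine mul_le_mul_of_nonneg_left (add_le_add_right ((hcount i).trans_eq ?_) _)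
          (by positivity)
        simp; ring

/-- A Berry–Esseen bound: by Efron–Stein, locality keeps the Stein factor concentrated. -/
theorem abs_measureReal_sub_stdGaussCDF_le_of_variance_eq_one [NeZero n] (hw : Measurable w)
    (hL2 : MemLp w 2 νⁿ) (hmean : ∫ X, w X ∂νⁿ = 0) (hvar : Var[w; νⁿ] = 1) (hδ : 0 < δ)
    (hbd : HasBoundedDifferences w δ) (hloc : HasLocalDifferences Q w)
    (hQ : MeasurableSet {p : E × E | Q p.1 p.2}) (hq : ∀ x, ν.real {y | Q x y} ≤ q) (t : ℝ) :
    |(νⁿ).real (w ⁻¹' Iic t) - stdGaussCDF t| ≤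
      2 * (2 * √(n * δ ^ 4 * (1 + 8 * n * q + (8 * n * q) ^ 2)) + 12 * (n * δ ^ 3) + δ) := by
  have hpres := measurePreserving_resample ν (∅ : Set (Fin n))
  have habs : ∫ z, |w (resample ∅ z)| ∂ν²ⁿ ≤ 1 := by
    rw [integral_comp_of_measurePreserving hpres (g := fun X => |w X|) hw.abs.aestronglyMeasurable]
    simpa [hmean, hvar] using integral_abs_sub_integral_le_sqrt_variance hL2
  have hfactor : ∫ z, |1 - resampleFactor w z| ∂ν²ⁿ ≤
      √(n * δ ^ 4 * (1 + 8 * n * q + (8 * n * q) ^ 2)) := by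
    have hT : MemLp (resampleFactor w) 2 ν²ⁿ :=
      .of_bound (measurable_resampleFactor hw).aestronglyMeasurable _
        (.of_forall hbd.abs_resampleFactor_le)
    have hdev := integral_abs_sub_integral_le_sqrt_variance hT
    rw [integral_resampleFactor hL2, hvar] at hdev
    simp_rw [abs_sub_comm (1 : ℝ)]
    exact hdev.trans (Real.sqrt_le_sqrt (variance_resampleFactor_le hw hbd hloc hQ hq))
  have hstein := (isSteinCoupling_resample hw hL2 hmean hbd).abs_measureReal_sub_stdGaussCDF_le
    ((memLp_comp_resample hL2 ∅).integrable one_le_two) habs hδ t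
  rw [Fintype.card_fin] at hstein
  rw [← hpres.measureReal_preimage (hw measurableSet_Iic).nullMeasurableSet]
  exact hstein.trans (by gcongr; exact hfactor)

theorem abs_measureReal_standardize_sub_stdGaussCDF_le [NeZero n] (hg : Measurable g)
    (hL2 : MemLp g 2 νⁿ) (hσ : 0 < σ) (hvar : Var[g; νⁿ] = σ ^ 2) (hc : 0 < c)
    (hbd : HasBoundedDifferences g c) (hloc : HasLocalDifferences Q g)
    (hQ : MeasurableSet {p : E × E | Q p.1 p.2}) (hq : ∀ x, ν.real {y | Q x y} ≤ q) (t : ℝ) :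
    |(νⁿ).real {X | (g X - νⁿ[g]) / σ ≤ t} - stdGaussCDF t| ≤
      2 * (2 * √(n * (c / σ) ^ 4 * (1 + 8 * n * q + (8 * n * q) ^ 2)) +
        12 * (n * (c / σ) ^ 3) + c / σ) := by
  refine abs_measureReal_sub_stdGaussCDF_le_of_variance_eq_one ((hg.sub_const _).div_const _)
    ?_ ?_ ?_ (div_pos hc hσ) (hbd.sub_const_div _ hσ) (hloc.sub_const_div _ _) hQ hq t
  · simp_rw [div_eq_inv_mul]
    exact (hL2.sub (memLp_const _)).const_mul σ⁻¹
  · simp [integral_div, integral_sub (hL2.integrable one_le_two) (integrable_const _)]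
  · simp_rw [div_eq_mul_inv]
    rw [variance_mul_const, variance_sub_const hL2.aestronglyMeasurable, hvar]
    field_simp

end LocalBerryEsseen

section Isolated

variable {ι E : Type*} {R Q : E → E → Prop} {κ : ℕ}

/-- The configurations whose point `k` is `R`-related to no other point. -/
def isolatedSet (R : E → E → Prop) (k : ι) : Set (ι → E) := {X | ∀ l ≠ k, ¬ R (X l) (X k)}

/-- The number of points which are `R`-related to no other point. -/
def isolatedCount [Fintype ι] (R : E → E → Prop) (X : ι → E) : ℝ :=
  ∑ k, (isolatedSet R k).indicator 1 X

/-- At most `κ` pairwise unrelated points are related to a common point. -/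
def IsPackingBound (R : E → E → Prop) (κ : ℕ) : Prop :=
  ∀ (x : E) (s : Finset E), (∀ y ∈ s, R x y) →
    (s : Set E).Pairwise (fun y z => ¬ R y z) → s.card ≤ κ

lemma indicator_isolatedSet_update {k i : ι} (hki : k ≠ i) {X : ι → E} {y : E}
    (hfar : ∀ a ∈ ({X i, y} : Set E), ¬ R a (X k)) :
    (isolatedSet R k).indicator (1 : (ι → E) → ℝ) (Function.update X i y) =
      (isolatedSet R k).indicator 1 X := by
  refine indicator_eq_indicator (forall_congr' fun l => ?_) rfl
  rw [Function.update_of_ne hki]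
  rcases eq_or_ne l i with rfl | hli
  · simp [hfar (X l) (mem_insert _ _), hfar y (mem_insert_of_mem _ rfl)]
  · rw [Function.update_of_ne hli]

lemma card_le_of_isPackingBound (hR : ∀ a, R a a) (hκ : IsPackingBound R κ) {X : ι → E} {y : E}
    {s : Finset ι} (hs : ∀ k ∈ s, X ∈ isolatedSet R k ∧ R y (X k)) : s.card ≤ κ := by
  have hinj : (s : Set ι).InjOn X := fun k hk l _ hkl => by
    by_contra hne
    exact (hs k hk).1 l (Ne.symm hne) (hkl ▸ hR (X k))
  rw [← Finset.card_image_of_injOn hinj]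
  refine hκ y _ (by simpa using fun k hk => (hs k hk).2) fun a ha b hb hab => ?_
  obtain ⟨k, -, rfl⟩ := Finset.mem_image.mp ha
  obtain ⟨l, hl, rfl⟩ := Finset.mem_image.mp hb
  exact (hs l hl).1 k fun hkl => hab (hkl ▸ rfl)

lemma isolatedCount_sub_update_le [Fintype ι] (hR : ∀ a, R a a) (hκ : IsPackingBound R κ)
    (X : ι → E) (i : ι) (y : E) :
    isolatedCount R X - isolatedCount R (Function.update X i y) ≤ 1 + κ := by
  set s : Finset ι := Finset.univ.filter fun k => k ≠ i ∧ X ∈ isolatedSet R k ∧ R y (X k) with hs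
  have hcard : (s.card : ℝ) ≤ κ :=
    mod_cast card_le_of_isPackingBound hR hκ fun k hk => (Finset.mem_filter.mp hk).2.2
  have hterm (k : ι) : (isolatedSet R k).indicator (1 : (ι → E) → ℝ) X -
      (isolatedSet R k).indicator 1 (Function.update X i y) ≤
        (if k = i then 1 else 0) + (if k ∈ s then 1 else 0) := by
    have hle : (isolatedSet R k).indicator (1 : (ι → E) → ℝ) X ≤ 1 :=
      indicator_le_self' (fun _ _ => zero_le_one) X
    have hnonneg : 0 ≤ (isolatedSet R k).indicator (1 : (ι → E) → ℝ) (Function.update X i y) :=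
      indicator_nonneg (fun _ _ => zero_le_one) _
    by_cases hki : k = i
    · rw [if_pos hki]; split_ifs <;> linarith
    by_cases hks : k ∈ s
    · rw [if_neg hki, if_pos hks]; linarith
    by_cases hk : X ∈ isolatedSet R k
    · have hy : ¬ R y (X k) := fun h => hks (by simp [hs, hki, hk, h])
      rw [indicator_isolatedSet_update hki
        (by rintro a (rfl | rfl); exacts [hk i (Ne.symm hki), hy])]
      simp [hki, hks]
    · simpa [hk, hki, hks] using hnonneg
  calc isolatedCount R X - isolatedCount R (Function.update X i y)
    _ ≤ ∑ k, ((if k = i then 1 else 0) + (if k ∈ s then 1 else 0)) := by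
        unfold isolatedCount
        rw [← Finset.sum_sub_distrib]
        exact Finset.sum_le_sum fun k _ => hterm k
    _ = 1 + s.card := by simp [Finset.sum_add_distrib]
    _ ≤ 1 + κ := by gcongr

lemma hasBoundedDifferences_isolatedCount [Fintype ι] (hR : ∀ a, R a a) (hκ : IsPackingBound R κ) :
    HasBoundedDifferences (isolatedCount R : (ι → E) → ℝ) (1 + κ) := fun X i y => by
  have hback := isolatedCount_sub_update_le hR hκ (Function.update X i y) i (X i)
  rw [Function.update_idem, Function.update_eq_self] at hback
  exact abs_sub_le_iff.mpr ⟨isolatedCount_sub_update_le hR hκ X i y, hback⟩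

lemma indicator_isolatedSet_sub_update_eq {k i j : ι} (hij : i ≠ j) (hki : k ≠ i) {X : ι → E}
    {y u : E} (hfar : ∀ a ∈ ({X i, y} : Set E), ¬ R a (X k) ∧ ¬ R a (Function.update X j u k)) :
    (isolatedSet R k).indicator (1 : (ι → E) → ℝ) (Function.update X i y) -
        (isolatedSet R k).indicator 1 (Function.update (Function.update X i y) j u) =
      (isolatedSet R k).indicator 1 X - (isolatedSet R k).indicator 1 (Function.update X j u) := by
  have hXj : Function.update X j u i = X i := Function.update_of_ne hij _ _
  rw [Function.update_comm hij, indicator_isolatedSet_update hki fun a ha => (hfar a ha).1,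
    indicator_isolatedSet_update hki fun a ha => (hfar a (hXj ▸ ha)).2]

lemma hasLocalDifferences_isolatedCount [Fintype ι] (hrefl : ∀ a, R a a)
    (hsymm : ∀ a b, R a b → R b a) (hcomp : ∀ a b c, R a b → R b c → Q a c) :
    HasLocalDifferences Q (isolatedCount R : (ι → E) → ℝ) := fun X i j y u hij hfar => by
  unfold isolatedCount
  rw [← Finset.sum_sub_distrib, ← Finset.sum_sub_distrib]
  refine Finset.sum_congr rfl fun k _ => ?_
  have hRQ (a b : E) (hab : R a b) : Q a b := hcomp a a b (hrefl a) hab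
  have of_far_i := indicator_isolatedSet_sub_update_eq (R := R) (X := X) (y := y) (u := u) (k := k)
    hij
  have of_far_j := indicator_isolatedSet_sub_update_eq (R := R) (X := X) (y := u) (u := y) (k := k)
    hij.symm
  rw [Function.update_comm hij.symm] at of_far_j
  rcases eq_or_ne k j with rfl | hkj
  · refine of_far_i hij.symm fun a ha => ⟨fun hR => hfar a ha _ (mem_insert _ _) (hRQ _ _ hR), ?_⟩
    rw [Function.update_self]
    exact fun hR => hfar a ha u (mem_insert_of_mem _ rfl) (hRQ _ _ hR)
  rcases eq_or_ne k i with rfl | hki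
  · have := of_far_j hij fun b hb =>
      ⟨fun hR => hfar _ (mem_insert _ _) b hb (hRQ _ _ (hsymm _ _ hR)), by
        rw [Function.update_self]
        exact fun hR => hfar y (mem_insert_of_mem _ rfl) b hb (hRQ _ _ (hsymm _ _ hR))⟩
    linarith
  rw [Function.update_of_ne hkj] at of_far_i
  rw [Function.update_of_ne hki] at of_far_j
  -- The point `k` cannot be related to both places: these would then be `Q`-related.
  by_cases hnear : ∃ b ∈ ({X j, u} : Set E), R b (X k)
  · obtain ⟨b, hb, hbk⟩ := hnear
    exact of_far_i hki fun a ha =>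
      and_self_iff.mpr fun hak => hfar a ha b hb (hcomp _ _ _ hak (hsymm _ _ hbk))
  · push Not at hnear
    have := of_far_j hkj fun b hb => and_self_iff.mpr (hnear b hb)
    linarith

lemma setOf_update_update_mem_isolatedSet (hsymm : ∀ a b, R a b → R b a) {k l : ι} (hkl : k ≠ l)
    {x y : E} (hyx : ¬ R y x) :
    {X | Function.update (Function.update X l y) k x ∈ isolatedSet R k ∩ isolatedSet R l} =
      {X | ∀ m ∉ ({k, l} : Finset ι), X m ∈ {z | ¬ R z x ∧ ¬ R z y}} := by
  ext X
  simp only [isolatedSet, mem_inter_iff, mem_ofPred_eq, Finset.mem_insert, Finset.mem_singleton,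
    not_or, Function.update_self, Function.update_of_ne hkl.symm]
  refine ⟨fun ⟨hk, hl⟩ m ⟨hmk, hml⟩ => ?_, fun h => ⟨fun m hmk => ?_, fun m hml => ?_⟩⟩
  · simpa [hmk, hml] using And.intro (hk m hmk) (hl m hml)
  · rcases eq_or_ne m l with rfl | hml
    · simpa [hmk] using hyx
    · simpa [hmk, hml] using (h m ⟨hmk, hml⟩).1
  · rcases eq_or_ne m k with rfl | hmk
    · simpa using fun hxy => hyx (hsymm _ _ hxy)
    · simpa [hmk, hml] using (h m ⟨hmk, hml⟩).2

lemma isolatedCount_nonneg [Fintype ι] (X : ι → E) : 0 ≤ isolatedCount R X :=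
  Finset.sum_nonneg fun _ _ => indicator_nonneg (fun _ _ => zero_le_one) _

lemma isolatedCount_le_card [Fintype ι] (X : ι → E) : isolatedCount R X ≤ Fintype.card ι :=
  (Finset.sum_le_card_nsmul _ _ (1 : ℝ) fun _ _ =>
    indicator_le_self' (fun _ _ => zero_le_one) X).trans_eq (by simp)

end Isolated

section IsolatedMoments

variable {ι E : Type*} [MeasurableSpace E] {R : E → E → Prop}

lemma measurableSet_isolatedSet [Countable ι] (hR : MeasurableSet {p : E × E | R p.1 p.2}) (k : ι) :
    MeasurableSet (isolatedSet R k) := by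
  have heq : isolatedSet R k = ⋂ l, ⋂ _ : l ≠ k, {X : ι → E | R (X l) (X k)}ᶜ := by
    ext X; simp [isolatedSet]
  have hpair (l : ι) : Measurable fun X : ι → E => (X l, X k) :=
    (measurable_pi_apply l).prodMk (measurable_pi_apply k)
  rw [heq]
  exact .iInter fun l => .iInter fun _ => (hpair l hR).compl

variable [Fintype ι] {ν : Measure E} [IsProbabilityMeasure ν]

local notation "ν^ι" => Measure.pi fun _ : ι => ν

lemma measurable_isolatedCount (hR : MeasurableSet {p : E × E | R p.1 p.2}) :
    Measurable (isolatedCount R : (ι → E) → ℝ) :=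
  Finset.measurable_sum _ fun k _ => measurable_one.indicator (measurableSet_isolatedSet hR k)

lemma memLp_isolatedCount (hR : MeasurableSet {p : E × E | R p.1 p.2}) (p : ℝ≥0∞) :
    MemLp (isolatedCount R) p ν^ι :=
  .of_bound (measurable_isolatedCount hR).aestronglyMeasurable (Fintype.card ι)
    (.of_forall fun X => by
      simpa [abs_of_nonneg (isolatedCount_nonneg X)] using isolatedCount_le_card X)

lemma measureReal_pi_eq_integral_update (k : ι) {A : Set (ι → E)} (hA : MeasurableSet A) :
    (ν^ι).real A = ∫ x, (ν^ι).real {X | Function.update X k x ∈ A} ∂ν := by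
  have hpre : MeasurableSet ((fun p : (ι → E) × E => Function.update p.1 k p.2) ⁻¹' A) :=
    measurable_update_prod k hA
  rw [← (measurePreserving_update ν k).measureReal_preimage hA.nullMeasurableSet, Measure.real,
    Measure.prod_apply_symm hpre]
  exact (integral_toReal (measurable_measure_prodMk_right hpre).aemeasurable
    (.of_forall fun x => measure_lt_top _ _)).symm

lemma measureReal_pi_setOf_forall_notMem (s : Finset ι) (B : Set E) :
    (ν^ι).real {X | ∀ m ∉ s, X m ∈ B} = ν.real B ^ (Fintype.card ι - s.card) := by
  have hpi : {X : ι → E | ∀ m ∉ s, X m ∈ B} = univ.pi fun m => if m ∈ s then univ else B := by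
    ext X
    refine forall_congr' fun m => ?_
    by_cases hm : m ∈ s <;> simp [hm]
  simp_rw [hpi, Measure.real, Measure.pi_pi, apply_ite ν, measure_univ, ENNReal.toReal_prod]
  rw [Finset.prod_congr rfl fun m _ => apply_ite ENNReal.toReal (m ∈ s) 1 (ν B), Finset.prod_ite]
  simp [Finset.filter_not, Finset.card_sdiff]

lemma measureReal_isolatedSet (hR : MeasurableSet {p : E × E | R p.1 p.2}) (k : ι) :
    (ν^ι).real (isolatedSet R k) = ∫ x, ν.real {y | ¬ R y x} ^ (Fintype.card ι - 1) ∂ν := by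
  rw [measureReal_pi_eq_integral_update k (measurableSet_isolatedSet hR k)]
  refine integral_congr_ae (.of_forall fun x => ?_)
  have hset : {X : ι → E | Function.update X k x ∈ isolatedSet R k} =
      {X | ∀ m ∉ ({k} : Finset ι), X m ∈ {y | ¬ R y x}} := by
    ext X
    refine forall_congr' fun m => ?_
    rcases eq_or_ne m k with rfl | hmk
    · simp
    · simp [hmk]
  dsimp only
  rw [hset, measureReal_pi_setOf_forall_notMem, Finset.card_singleton]

lemma measureReal_isolatedSet_inter (hR : MeasurableSet {p : E × E | R p.1 p.2})
    (hsymm : ∀ a b, R a b → R b a) {k l : ι} (hkl : k ≠ l) :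
    (ν^ι).real (isolatedSet R k ∩ isolatedSet R l) =
      ∫ x, ∫ y in {y | ¬ R y x}, ν.real {z | ¬ R z x ∧ ¬ R z y} ^ (Fintype.card ι - 2) ∂ν ∂ν := by
  have hA := (measurableSet_isolatedSet hR k).inter (measurableSet_isolatedSet hR l)
  rw [measureReal_pi_eq_integral_update k hA]
  refine integral_congr_ae (.of_forall fun x => ?_)
  dsimp only
  have hA' : MeasurableSet {X : ι → E |
      Function.update X k x ∈ isolatedSet R k ∩ isolatedSet R l} :=
    (measurable_update_prod k).comp measurable_prodMk_right hA
  have hfar : MeasurableSet {y | ¬ R y x} := (measurable_prodMk_right hR).compl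
  rw [measureReal_pi_eq_integral_update l hA', ← integral_indicator hfar]
  refine integral_congr_ae (.of_forall fun y => ?_)
  dsimp only
  by_cases hyx : R y x
  · rw [indicator_of_notMem (not_not.mpr hyx), measureReal_eq_zero_iff]
    convert measure_empty (μ := ν^ι)
    refine eq_empty_of_forall_notMem fun X hX => hX.1 l hkl.symm ?_
    simpa [hkl, hkl.symm] using hyx
  · rw [indicator_of_mem hyx, ← Finset.card_pair hkl, ← measureReal_pi_setOf_forall_notMem]
    exact congrArg _ (setOf_update_update_mem_isolatedSet hsymm hkl hyx)

end IsolatedMoments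

section NearRelation

variable {E : Type*} [PseudoMetricSpace E]

/-- Two points are near each other when their distance is at most `r`; the isolated points of the
theorem are those which are isolated for this relation. -/
def Near (r : ℝ) (x y : E) : Prop := dist x y ≤ r

lemma near_self {r : ℝ} (hr : 0 ≤ r) (x : E) : Near r x x := (dist_self x).trans_le hr

lemma Near.symm {r : ℝ} {x y : E} (h : Near r x y) : Near r y x := (dist_comm y x).trans_le h

lemma Near.trans {r s : ℝ} {x y z : E} (h : Near r x y) (h' : Near s y z) : Near (r + s) x z :=
  (dist_triangle x y z).trans (add_le_add h h')

lemma measurableSet_near [MeasurableSpace E] [OpensMeasurableSpace E] [SecondCountableTopology E]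
    (r : ℝ) : MeasurableSet {p : E × E | Near r p.1 p.2} :=
  measurableSet_le measurable_dist measurable_const

end NearRelation

lemma sum_sum_eq_of_eq_diag_of_eq_offDiag {ι : Type*} [Fintype ι] {f : ι → ι → ℝ} {a b : ℝ}
    (hdiag : ∀ k, f k k = a) (hoff : ∀ k l, k ≠ l → f k l = b) :
    ∑ k, ∑ l, f k l = Fintype.card ι * a + Fintype.card ι * (Fintype.card ι - 1) * b := by
  have hf (k l : ι) : f k l = (if k = l then a - b else 0) + b := by
    split_ifs with h
    · rw [← h, hdiag]; ring
    · rw [hoff k l h, zero_add]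
  simp only [hf, Finset.sum_add_distrib, Finset.sum_ite_eq, Finset.mem_univ, if_true,
    Finset.sum_const, Finset.card_univ, nsmul_eq_mul]
  ring

section InvariantVariance

variable {ι G : Type*} [SeminormedAddCommGroup G] [MeasurableSpace G] [BorelSpace G]
  {μ : Measure G} {r : ℝ}

lemma measureReal_closedBall_union_add [μ.IsAddLeftInvariant] (x y a : G) (r : ℝ) :
    μ.real (closedBall (a + x) r ∪ closedBall (a + y) r) =
      μ.real (closedBall x r ∪ closedBall y r) := by
  rw [measureReal_def, ← measure_preimage_add μ a, preimage_union, preimage_add_left_closedBall,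
    preimage_add_left_closedBall, neg_add_cancel_left, neg_add_cancel_left, measureReal_def]

lemma measureReal_closedBall_eq [μ.IsAddLeftInvariant] (x y : G) (r : ℝ) :
    μ.real (closedBall x r) = μ.real (closedBall y r) := by
  simpa using measureReal_closedBall_union_add (μ := μ) y y (x - y) r

lemma measureReal_closedBall_union_of_notMem [IsFiniteMeasure μ] [μ.IsAddLeftInvariant]
    {a : G} (ha : a ∉ closedBall 0 (2 * r)) :
    μ.real (closedBall 0 r ∪ closedBall a r) = 2 * μ.real (closedBall 0 r) := by
  have hdisj : Disjoint (closedBall 0 r) (closedBall a r) := by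
    rw [mem_closedBall, not_le, dist_comm] at ha
    exact closedBall_disjoint_closedBall (by linarith)
  rw [measureReal_union hdisj measurableSet_closedBall, measureReal_closedBall_eq a 0, two_mul]

lemma measurable_measureReal_closedBall_union [SecondCountableTopology G] [SFinite μ]
    (r : ℝ) :
    Measurable fun a => μ.real (closedBall 0 r ∪ closedBall a r) := by
  have hset : MeasurableSet {p : G × G | dist p.2 0 ≤ r ∨ dist p.2 p.1 ≤ r} :=
    (measurableSet_le (measurable_snd.dist measurable_const) measurable_const).union
      (measurableSet_le (measurable_snd.dist measurable_fst) measurable_const)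
  exact (measurable_measure_prodMk_left hset).ennreal_toReal

variable [SecondCountableTopology G] [IsProbabilityMeasure μ]

lemma integrable_one_sub_measureReal_closedBall_union_pow (r : ℝ) (m : ℕ) :
    Integrable (fun a => (1 - μ.real (closedBall 0 r ∪ closedBall a r)) ^ m) μ := by
  refine .of_bound (((measurable_measureReal_closedBall_union r).const_sub 1).pow_const m
    |>.aestronglyMeasurable) 1 (.of_forall fun a => ?_)
  have hle : μ.real (closedBall 0 r ∪ closedBall a r) ≤ 1 := measureReal_le_one
  rw [Real.norm_eq_abs, abs_pow, abs_of_nonneg (sub_nonneg.mpr hle)]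
  exact pow_le_one₀ (sub_nonneg.mpr hle) (sub_le_self _ measureReal_nonneg)

variable [Fintype ι] [μ.IsAddLeftInvariant]

local notation "μ^ι" => Measure.pi fun _ : ι => μ

lemma measureReal_isolatedSet_near (k : ι) :
    (μ^ι).real (isolatedSet (Near r) k) =
      (1 - μ.real (closedBall 0 r)) ^ (Fintype.card ι - 1) := by
  have hfar (x : G) : μ.real {y | ¬ Near r y x} = 1 - μ.real (closedBall 0 r) := by
    rw [← measureReal_closedBall_eq x, ← probReal_compl_eq_one_sub measurableSet_closedBall]
    rfl
  simp [measureReal_isolatedSet (measurableSet_near r) k, hfar]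

lemma measureReal_isolatedSet_near_inter {k l : ι} (hkl : k ≠ l) :
    (μ^ι).real (isolatedSet (Near r) k ∩ isolatedSet (Near r) l) =
      ∫ a in (closedBall 0 r)ᶜ,
        (1 - μ.real (closedBall 0 r ∪ closedBall a r)) ^ (Fintype.card ι - 2) ∂μ := by
  have hfar (x y : G) : μ.real {z | ¬ Near r z x ∧ ¬ Near r z y} =
      1 - μ.real (closedBall 0 r ∪ closedBall (y - x) r) := by
    rw [← measureReal_closedBall_union_add _ _ x, add_zero, add_sub_cancel,
      ← probReal_compl_eq_one_sub (measurableSet_closedBall.union measurableSet_closedBall),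
      compl_union]
    rfl
  have hshift (x : G) : ∫ y in {y | ¬ Near r y x},
        (1 - μ.real (closedBall 0 r ∪ closedBall (y - x) r)) ^ (Fintype.card ι - 2) ∂μ =
      ∫ a in (closedBall 0 r)ᶜ,
        (1 - μ.real (closedBall 0 r ∪ closedBall a r)) ^ (Fintype.card ι - 2) ∂μ := by
    have hnear : MeasurableSet {y | ¬ Near r y x} := measurableSet_closedBall.compl
    rw [← integral_indicator hnear, ← integral_indicator measurableSet_closedBall.compl,
      ← integral_sub_right_eq_self (indicator (closedBall 0 r)ᶜ _) x]
    refine integral_congr_ae (.of_forall fun y => ?_)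
    simp [indicator_apply, Near, dist_eq_norm]
  rw [measureReal_isolatedSet_inter (measurableSet_near r) (fun _ _ => Near.symm) hkl]
  simp [hfar, hshift]

lemma setIntegral_compl_closedBall_one_sub_measureReal_union_pow (hr : 0 ≤ r) (m : ℕ) :
    ∫ a in (closedBall 0 r)ᶜ, (1 - μ.real (closedBall 0 r ∪ closedBall a r)) ^ m ∂μ =
      (∫ a in closedBall 0 (2 * r) \ closedBall 0 r,
        (1 - μ.real (closedBall 0 r ∪ closedBall a r)) ^ m ∂μ) +
      (1 - μ.real (closedBall 0 (2 * r))) * (1 - 2 * μ.real (closedBall 0 r)) ^ m := by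
  set f : G → ℝ := fun a => (1 - μ.real (closedBall 0 r ∪ closedBall a r)) ^ m with hf
  have hint : Integrable f μ := integrable_one_sub_measureReal_closedBall_union_pow r m
  have hsplit : (closedBall (0 : G) r)ᶜ =
      closedBall 0 (2 * r) \ closedBall 0 r ∪ (closedBall 0 (2 * r))ᶜ := by
    ext a
    have hmono : a ∈ closedBall 0 r → a ∈ closedBall 0 (2 * r) :=
      fun ha => closedBall_subset_closedBall (by linarith) ha
    simp only [mem_compl_iff, mem_union, Set.mem_sdiff]
    tauto
  have hdisj : Disjoint (closedBall 0 (2 * r) \ closedBall 0 r) (closedBall (0 : G) (2 * r))ᶜ :=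
    disjoint_compl_right.mono_left sdiff_subset
  have houter : ∫ a in (closedBall 0 (2 * r))ᶜ, f a ∂μ =
      (1 - μ.real (closedBall 0 (2 * r))) * (1 - 2 * μ.real (closedBall 0 r)) ^ m := by
    rw [setIntegral_congr_fun measurableSet_closedBall.compl fun a ha =>
        show f a = (1 - 2 * μ.real (closedBall 0 r)) ^ m by
          simp only [hf, measureReal_closedBall_union_of_notMem ha],
      setIntegral_const, probReal_compl_eq_one_sub measurableSet_closedBall, smul_eq_mul]
  rw [hsplit, setIntegral_union hdisj measurableSet_closedBall.compl hint.integrableOn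
    hint.integrableOn, houter]

lemma integral_isolatedCount_near :
    ∫ X, isolatedCount (Near r) X ∂μ^ι =
      Fintype.card ι * (1 - μ.real (closedBall 0 r)) ^ (Fintype.card ι - 1) := by
  have hmeas (k : ι) : MeasurableSet (isolatedSet (Near r) k : Set (ι → G)) :=
    measurableSet_isolatedSet (measurableSet_near r) k
  unfold isolatedCount
  rw [integral_finsetSum _ fun k _ => (integrable_const 1).indicator (hmeas k)]
  simp [integral_indicator_one, hmeas, measureReal_isolatedSet_near]

theorem variance_isolatedCount_near (hr : 0 ≤ r) :
    Var[isolatedCount (Near r); μ^ι] =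
      Fintype.card ι * (1 - μ.real (closedBall 0 r)) ^ (Fintype.card ι - 1) +
      Fintype.card ι * (Fintype.card ι - 1) *
        ((∫ a in closedBall 0 (2 * r) \ closedBall 0 r,
            (1 - μ.real (closedBall 0 r ∪ closedBall a r)) ^ (Fintype.card ι - 2) ∂μ) +
          (1 - μ.real (closedBall 0 (2 * r))) *
            (1 - 2 * μ.real (closedBall 0 r)) ^ (Fintype.card ι - 2)) -
      (Fintype.card ι * (1 - μ.real (closedBall 0 r)) ^ (Fintype.card ι - 1)) ^ 2 := by
  rw [variance_eq_sub (memLp_isolatedCount (measurableSet_near r) 2), integral_isolatedCount_near,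
    ← setIntegral_compl_closedBall_one_sub_measureReal_union_pow hr]
  have hpairs := integral_sum_indicator_sq (P := μ^ι) fun k : ι =>
    measurableSet_isolatedSet (measurableSet_near (E := G) r) k
  rw [sum_sum_eq_of_eq_diag_of_eq_offDiag
    (fun k => by rw [inter_self, measureReal_isolatedSet_near])
    fun k l hkl => measureReal_isolatedSet_near_inter hkl] at hpairs
  exact congrArg (· - _) hpairs

end InvariantVariance

section FlatTorus

variable {d : ℕ} {L r ρ : ℝ}

/-- The flat torus `(ℝ / L ℤ)^d` with its Euclidean metric; the cube `C_n` with the toroidal metric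
of the theorem is a fundamental domain. -/
abbrev FlatTorus (d : ℕ) (L : ℝ) : Type := PiLp 2 fun _ : Fin d => AddCircle L

/-- The covering map of the flat torus. -/
def torusMk (L : ℝ) (x : EuclideanSpace ℝ (Fin d)) : FlatTorus d L :=
  WithLp.toLp 2 fun i => (x i : AddCircle L)

lemma torusMk_sub (x y : EuclideanSpace ℝ (Fin d)) :
    torusMk L (x - y) = torusMk L x - torusMk L y := rfl

lemma norm_torusMk_le (x : EuclideanSpace ℝ (Fin d)) : ‖torusMk L x‖ ≤ ‖x‖ := by
  rw [EuclideanSpace.norm_eq, PiLp.norm_eq_of_L2]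
  gcongr with i
  exact QuotientAddGroup.norm_mk_le_norm (S := AddSubgroup.zmultiples L)

lemma norm_torusMk_eq (hL : 0 < L) {x : EuclideanSpace ℝ (Fin d)} (hx : ∀ i, |x i| ≤ L / 2) :
    ‖torusMk L x‖ = ‖x‖ := by
  rw [EuclideanSpace.norm_eq, PiLp.norm_eq_of_L2]
  refine congrArg _ (Finset.sum_congr rfl fun i _ => congrArg (· ^ 2) ?_)
  exact (AddCircle.norm_coe_eq_abs_iff L hL.ne').mpr (by rw [abs_of_pos hL]; exact hx i)

lemma dist_torusMk_eq (hL : 0 < L) {x y : EuclideanSpace ℝ (Fin d)} (hxy : dist x y ≤ L / 2) :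
    dist (torusMk L x) (torusMk L y) = dist x y := by
  rw [dist_eq_norm] at hxy
  rw [dist_eq_norm, dist_eq_norm, ← torusMk_sub]
  exact norm_torusMk_eq hL fun i => (PiLp.norm_apply_le (x - y) i).trans hxy

lemma measurable_torusMk : Measurable (torusMk L : EuclideanSpace ℝ (Fin d) → FlatTorus d L) :=
  (WithLp.measurable_toLp 2 _).comp (measurable_pi_lambda _ fun i =>
    (AddCircle.measurable_mk' (a := L)).comp (by fun_prop))

variable [Fact (0 < L)]

lemma exists_torusMk_eq_norm_eq (a : FlatTorus d L) :
    ∃ x : EuclideanSpace ℝ (Fin d), torusMk L x = a ∧ ‖x‖ = ‖a‖ := by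
  set x : EuclideanSpace ℝ (Fin d) :=
    WithLp.toLp 2 fun i => (AddCircle.equivIoc L (-(L / 2)) (a i) : ℝ)
  have hmk : torusMk L x = a := by
    ext i; exact AddCircle.coe_equivIoc
  refine ⟨x, hmk, ?_⟩
  rw [← hmk, norm_torusMk_eq Fact.out fun i => ?_]
  obtain ⟨hlo, hhi⟩ := (AddCircle.equivIoc L (-(L / 2)) (a i)).2
  exact abs_le.mpr ⟨hlo.le, hhi.trans_eq (by ring)⟩

/-- Lifting the points to the ball of radius `ρ` of `ℝ^d` does not decrease their distances. -/
lemma isPackingBound_near_flatTorus (hρ : 0 < ρ) :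
    IsPackingBound (Near ρ : FlatTorus d L → FlatTorus d L → Prop) (5 ^ d) := by
  intro x s hnear hsep
  choose v hv hvnorm using fun y : FlatTorus d L => exists_torusMk_eq_norm_eq (y - x)
  have hdist (y z : FlatTorus d L) : dist y z ≤ ‖v y - v z‖ := by
    have := norm_torusMk_le (L := L) (v y - v z)
    rwa [torusMk_sub, hv, hv, sub_sub_sub_cancel_right, ← dist_eq_norm] at this
  have hone {y z : FlatTorus d L} (hy : y ∈ s) (hz : z ∈ s) (hyz : y ≠ z) :
      1 ≤ ‖ρ⁻¹ • v y - ρ⁻¹ • v z‖ := by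
    rw [← smul_sub, norm_smul, Real.norm_of_nonneg (inv_pos.mpr hρ).le, ← div_eq_inv_mul,
      one_le_div hρ]
    exact (not_le.mp (hsep hy hz hyz)).le.trans (hdist y z)
  have hinj : (s : Set (FlatTorus d L)).InjOn fun y => ρ⁻¹ • v y := fun y hy z hz hyz => by
    by_contra hne
    have := hone hy hz hne
    simp only [hyz, sub_self, norm_zero] at this
    linarith
  have hcard := Besicovitch.card_le_of_separated (s.image fun y => ρ⁻¹ • v y) ?_ ?_
  · rwa [Finset.card_image_of_injOn hinj, finrank_euclideanSpace_fin] at hcard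
  · refine Finset.forall_mem_image.mpr fun y hy => ?_
    have hy' : ‖v y‖ ≤ ρ := by
      rw [hvnorm, ← dist_eq_norm, dist_comm]; exact hnear y hy
    rw [norm_smul, Real.norm_of_nonneg (inv_pos.mpr hρ).le, ← div_eq_inv_mul, div_le_iff₀ hρ]
    linarith
  · refine Finset.forall_mem_image.mpr fun y hy => Finset.forall_mem_image.mpr fun z hz hne => ?_
    exact hone hy hz fun h => hne (h ▸ rfl)

end FlatTorus

section TorusMeasure

variable {d : ℕ} {L r ρ : ℝ} [hL : Fact (0 < L)]

/-- The uniform probability measure on the flat torus. -/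
def torusMeasure (d : ℕ) (L : ℝ) [Fact (0 < L)] : Measure (FlatTorus d L) :=
  ((L.toNNReal ^ d)⁻¹ : ℝ≥0) • (volume : Measure (Fin d → AddCircle L)).map (WithLp.toLp 2)

instance : IsProbabilityMeasure (torusMeasure d L) := by
  constructor
  have hne : L.toNNReal ^ d ≠ 0 := pow_ne_zero _ (by simpa using hL.out)
  rw [torusMeasure, Measure.smul_apply, Measure.map_apply (WithLp.measurable_toLp 2 _) .univ,
    preimage_univ, volume_pi, Measure.pi_univ]
  simp only [AddCircle.measure_univ, Finset.prod_const, Finset.card_univ, Fintype.card_fin]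
  rw [ENNReal.ofReal, ENNReal.smul_def, smul_eq_mul, ← ENNReal.coe_pow, ← ENNReal.coe_mul,
    inv_mul_cancel₀ hne, ENNReal.coe_one]

instance : (torusMeasure d L).IsAddLeftInvariant := by
  have hmap : ((volume : Measure (Fin d → AddCircle L)).map (WithLp.toLp 2)).IsAddLeftInvariant :=
    have : (volume : Measure (Fin d → AddCircle L)).IsAddLeftInvariant := by
      rw [volume_pi]; infer_instance
    isAddLeftInvariant_map (WithLp.linearEquiv 2 ℤ (Fin d → AddCircle L)).symm.toAddHom
      (WithLp.measurable_toLp 2 _) (WithLp.toLp_surjective 2)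
  unfold torusMeasure
  infer_instance

lemma measurePreserving_torusMk_cube (a : ℝ) :
    MeasurePreserving (fun x : Fin d → ℝ => torusMk L (WithLp.toLp 2 x))
      (((L.toNNReal ^ d)⁻¹ : ℝ≥0) • volume.restrict (univ.pi fun _ => Ioc a (a + L)))
      (torusMeasure d L) := by
  have hcoord : MeasurePreserving (fun (x : Fin d → ℝ) i => (x i : AddCircle L))
      (volume.restrict (univ.pi fun _ => Ioc a (a + L))) volume := by
    rw [volume_pi, Measure.restrict_pi_pi, volume_pi]
    exact measurePreserving_pi _ _ (f := fun _ (t : ℝ) => (t : AddCircle L)) fun _ =>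
      AddCircle.measurePreserving_mk L a
  exact ((WithLp.measurable_toLp 2 _).measurePreserving _ |>.comp hcoord).smul_measure _

lemma measurePreserving_uniformBox :
    MeasurePreserving (fun x : Fin d → ℝ => torusMk L (WithLp.toLp 2 x)) (uniformBox d L)
      (torusMeasure d L) := by
  have hae : box d L =ᵐ[volume] univ.pi fun _ => Ioc 0 (0 + L) := by
    rw [box, zero_add]
    exact Measure.univ_pi_Ico_ae_eq_Icc.trans Measure.univ_pi_Ioc_ae_eq_Icc.symm
  rw [uniformBox, Measure.restrict_congr_set hae]
  exact measurePreserving_torusMk_cube 0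

lemma measurePreserving_torusMk_closedBall (hr : r < L / 2) :
    MeasurePreserving (torusMk L)
      (((L.toNNReal ^ d)⁻¹ : ℝ≥0) •
        (volume : Measure (EuclideanSpace ℝ (Fin d))).restrict (closedBall 0 r))
      ((torusMeasure d L).restrict (closedBall 0 r)) := by
  set cube : Set (Fin d → ℝ) := univ.pi fun _ => Ioc (-(L / 2)) (-(L / 2) + L) with hcube
  have hofLp :=
    (EuclideanSpace.volume_preserving_symm_measurableEquiv_toLp (Fin d)).restrict_preimage
      (s := cube) (.univ_pi fun _ => measurableSet_Ioc)
  have hball : MeasurableSet (closedBall (0 : FlatTorus d L) r) := measurableSet_closedBall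
  have hmk : MeasurePreserving (torusMk L)
      ((((L.toNNReal ^ d)⁻¹ : ℝ≥0) • (volume : Measure (EuclideanSpace ℝ (Fin d))).restrict
        ((MeasurableEquiv.toLp 2 (Fin d → ℝ)).symm ⁻¹' cube)).restrict
          (torusMk L ⁻¹' closedBall 0 r))
      ((torusMeasure d L).restrict (closedBall 0 r)) :=
    ((measurePreserving_torusMk_cube (-(L / 2))).comp
      (hofLp.smul_measure _)).restrict_preimage hball
  have hpre : torusMk L ⁻¹' closedBall 0 r ∩ (MeasurableEquiv.toLp 2 (Fin d → ℝ)).symm ⁻¹' cube =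
      closedBall (0 : EuclideanSpace ℝ (Fin d)) r := by
    ext x
    simp only [mem_inter_iff, mem_preimage, mem_closedBall_zero_iff, hcube, mem_univ_pi, mem_Ioc]
    refine ⟨fun ⟨hx, hcube⟩ => ?_, fun hx => ⟨(norm_torusMk_le x).trans hx, fun i => ?_⟩⟩
    · rwa [norm_torusMk_eq hL.out fun i => abs_le.mpr
        ⟨(hcube i).1.le, (hcube i).2.trans_eq (by ring)⟩] at hx
    · have := abs_le.mp ((PiLp.norm_apply_le x i).trans hx)
      have hlo : -(L / 2) < x i := by linarith
      have hhi : x i ≤ -(L / 2) + L := by linarith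
      exact ⟨hlo, hhi⟩
  rwa [Measure.restrict_smul, Measure.restrict_restrict (measurable_torusMk hball), hpre] at hmk

lemma torusMeasure_real_eq (hr : r < L / 2) {A : Set (FlatTorus d L)} (hA : MeasurableSet A)
    (hAr : A ⊆ closedBall 0 r) :
    (torusMeasure d L).real A = volume.real (torusMk L ⁻¹' A ∩ closedBall 0 r) / L ^ d := by
  have h := (measurePreserving_torusMk_closedBall (d := d) hr).measureReal_preimage
    hA.nullMeasurableSet
  rw [measureReal_restrict_apply hA, inter_eq_left.mpr hAr, measureReal_nnreal_smul_apply,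
    measureReal_restrict_apply (measurable_torusMk hA)] at h
  rw [← h, div_eq_inv_mul, NNReal.coe_inv, NNReal.coe_pow, Real.coe_toNNReal _ hL.out.le]

lemma torusMeasure_real_closedBall (hr : r < L / 2) :
    (torusMeasure d L).real (closedBall 0 r) =
      volume.real (closedBall (0 : EuclideanSpace ℝ (Fin d)) r) / L ^ d := by
  rw [torusMeasure_real_eq hr measurableSet_closedBall subset_rfl,
    inter_eq_right.mpr fun x hx => ?_]
  exact mem_closedBall_zero_iff.mpr ((norm_torusMk_le x).trans (mem_closedBall_zero_iff.mp hx))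

lemma torusMeasure_real_closedBall_union (hρ : 10 * ρ < L) (hρ' : 0 ≤ ρ)
    {x : EuclideanSpace ℝ (Fin d)} (hx : ‖x‖ ≤ 2 * ρ) :
    (torusMeasure d L).real (closedBall 0 ρ ∪ closedBall (torusMk L x) ρ) =
      volume.real (closedBall 0 ρ ∪ closedBall x ρ) / L ^ d := by
  have hsub {E : Type} [NormedAddCommGroup E] {a : E} (ha : ‖a‖ ≤ 2 * ρ) :
      closedBall 0 ρ ∪ closedBall a ρ ⊆ closedBall 0 (3 * ρ) :=
    union_subset (closedBall_subset_closedBall (by linarith))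
      (closedBall_subset_closedBall' (by rw [dist_zero_right]; linarith))
  rw [torusMeasure_real_eq (by linarith) (measurableSet_closedBall.union measurableSet_closedBall)
    (hsub ((norm_torusMk_le x).trans hx))]
  congr 2
  rw [← inter_eq_left.mpr (hsub hx)]
  ext y
  refine and_congr_left fun hy => ?_
  have hy' : dist y 0 ≤ 3 * ρ := hy
  have hdist {z : EuclideanSpace ℝ (Fin d)} (hz : ‖z‖ ≤ 2 * ρ) :
      dist (torusMk L y) (torusMk L z) = dist y z :=
    dist_torusMk_eq hL.out (by
      have := dist_triangle_right y z 0
      rw [dist_zero_right z] at this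
      linarith)
  have hzero : torusMk L (0 : EuclideanSpace ℝ (Fin d)) = 0 := rfl
  simp only [mem_preimage, mem_union, mem_closedBall, ← hzero, hdist hx,
    hdist (norm_zero.trans_le (by linarith : 0 ≤ 2 * ρ))]

lemma setIntegral_torusMeasure_annulus {s : ℝ} (hr : r < L / 2) {f : FlatTorus d L → ℝ}
    (hf : Measurable f) :
    ∫ a in closedBall 0 r \ closedBall 0 s, f a ∂torusMeasure d L =
      (L ^ d)⁻¹ * ∫ x in closedBall (0 : EuclideanSpace ℝ (Fin d)) r \ closedBall 0 s,
        f (torusMk L x) := by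
  have hann : MeasurableSet (closedBall (0 : FlatTorus d L) r \ closedBall 0 s) :=
    measurableSet_closedBall.diff measurableSet_closedBall
  have hpre : torusMk L ⁻¹' (closedBall 0 r \ closedBall 0 s) ∩ closedBall 0 r =
      closedBall (0 : EuclideanSpace ℝ (Fin d)) r \ closedBall 0 s := by
    ext x
    by_cases hx : ‖x‖ ≤ r
    · have hmk : ‖torusMk L x‖ = ‖x‖ :=
        norm_torusMk_eq hL.out fun i => ((PiLp.norm_apply_le x i).trans hx).trans hr.le
      simp [hmk, hx]
    · simp [hx]
  have hmp := (measurePreserving_torusMk_closedBall (d := d) hr).restrict_preimage hann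
  rw [Measure.restrict_restrict hann, inter_eq_left.mpr sdiff_subset, Measure.restrict_smul,
    Measure.restrict_restrict (measurable_torusMk hann), hpre] at hmp
  rw [← integral_comp_of_measurePreserving hmp hf.aestronglyMeasurable,
    integral_smul_nnreal_measure, NNReal.smul_def, smul_eq_mul, NNReal.coe_inv, NNReal.coe_pow,
    Real.coe_toNNReal _ hL.out.le]

end TorusMeasure

section Transfer

variable {d n : ℕ} {L ρ : ℝ}

lemma iInf_abs_sub_int_mul (L t : ℝ) : ⨅ k : ℤ, |t - k * L| = ‖(t : AddCircle L)‖ := by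
  refine le_antisymm ?_ (le_ciInf fun k => ?_)
  · rw [AddCircle.norm_eq]
    exact ciInf_le (f := fun k : ℤ => |t - k * L|) ⟨0, forall_mem_range.mpr fun _ => abs_nonneg _⟩
      (round (L⁻¹ * t))
  · have hk : ((k * L : ℝ) : AddCircle L) = 0 := by
      rw [AddCircle.coe_eq_zero_iff]
      exact ⟨k, zsmul_eq_mul L k⟩
    have h := QuotientAddGroup.norm_mk_le_norm (S := AddSubgroup.zmultiples L) (m := t - k * L)
    change ‖((t - k * L : ℝ) : AddCircle L)‖ ≤ _ at h
    rwa [AddCircle.coe_sub, hk, sub_zero] at h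

lemma torDist_eq_dist_torusMk (x y : Fin d → ℝ) :
    torDist L x y = dist (torusMk L (WithLp.toLp 2 x)) (torusMk L (WithLp.toLp 2 y)) := by
  rw [torDist, dist_eq_norm, ← torusMk_sub, PiLp.norm_eq_of_L2]
  exact congrArg _ (Finset.sum_congr rfl fun i _ => congrArg (· ^ 2) (iInf_abs_sub_int_mul L _))

lemma range_inter_torBall_eq_singleton_iff (hρ : 0 ≤ ρ) {ω : Fin n → Fin d → ℝ}
    (hbox : ∀ i, ω i ∈ box d L) (hinj : Function.Injective ω) (i : Fin n) :
    range ω ∩ torBall L (ω i) ρ = {ω i} ↔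
      (fun j => torusMk L (WithLp.toLp 2 (ω j))) ∈ isolatedSet (Near ρ) i := by
  have hmem (j : Fin n) : ω j ∈ torBall L (ω i) ρ ↔
      Near ρ (torusMk L (WithLp.toLp 2 (ω j))) (torusMk L (WithLp.toLp 2 (ω i))) := by
    rw [Near, dist_comm, ← torDist_eq_dist_torusMk]
    exact and_iff_right (hbox j)
  refine ⟨fun h j hji hnear => hji (hinj ?_), fun h => Subset.antisymm ?_ ?_⟩
  · exact h.subset ⟨mem_range_self j, (hmem j).mpr hnear⟩
  · rintro _ ⟨⟨j, rfl⟩, hj⟩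
    by_contra hne
    exact h j (fun hji => hne (hji ▸ rfl)) ((hmem j).mp hj)
  · exact singleton_subset_iff.mpr ⟨mem_range_self i, (hmem i).mpr (near_self hρ _)⟩

lemma isolCount_eq_isolatedCount (hρ : 0 ≤ ρ) {ω : Fin n → Fin d → ℝ}
    (hbox : ∀ i, ω i ∈ box d (sideLen d n)) (hinj : Function.Injective ω) :
    isolCount d n ρ ω =
      isolatedCount (Near ρ) fun i => torusMk (sideLen d n) (WithLp.toLp 2 (ω i)) :=
  Finset.sum_congr rfl fun i _ => by
    simp only [indicator_apply, Pi.one_apply,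
      range_inter_torBall_eq_singleton_iff hρ hbox hinj]

lemma ae_injective_pi {ι E : Type*} [Fintype ι] [MeasurableSpace E] [MeasurableEq E]
    (ν : Measure E) [IsProbabilityMeasure ν] [NullSingletonClass ν] :
    ∀ᵐ X ∂Measure.pi fun _ : ι => ν, Function.Injective X := by
  suffices h : ∀ i j, i ≠ j → ∀ᵐ X ∂Measure.pi fun _ : ι => ν, X i ≠ X j by
    have hall : ∀ᵐ X ∂Measure.pi fun _ : ι => ν, ∀ i j, i ≠ j → X i ≠ X j :=
      ae_all_iff.mpr fun i => ae_all_iff.mpr fun j => ae_all_iff.mpr fun hij => h i j hij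
    filter_upwards [hall] with X hX i j hij
    by_contra hne
    exact hX i j hne hij
  intro i j hij
  have hdiag : MeasurableSet {X : ι → E | X i = X j} :=
    measurableSet_eq_fun (measurable_pi_apply i) (measurable_pi_apply j)
  have hupd := measurePreserving_update ν i
  have hnull : (Measure.pi fun _ : ι => ν) {X | X i = X j} = 0 := by
    rw [← hupd.measure_preimage hdiag.nullMeasurableSet,
      Measure.measure_prod_null (hupd.measurable hdiag)]
    refine .of_forall fun X => ?_
    have hsec : Prod.mk X ⁻¹' ((fun p : (ι → E) × E => Function.update p.1 i p.2) ⁻¹'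
        {X | X i = X j}) = {X j} := by
      ext y
      simp [Function.update_of_ne hij.symm]
    simp only [hsec, measure_singleton, Pi.zero_apply]
  exact measure_eq_zero_iff_ae_notMem.mp hnull

lemma ae_uniformBox_mem_box : ∀ᵐ x ∂uniformBox d L, x ∈ box d L :=
  Measure.ae_smul_measure (ae_restrict_mem (.univ_pi fun _ => measurableSet_Ico)) _

instance [Fact (0 < L)] : IsProbabilityMeasure (uniformBox d L) :=
  ⟨(measurePreserving_uniformBox.measure_preimage nullMeasurableSet_univ).trans measure_univ⟩

instance [Nonempty (Fin d)] : NullSingletonClass (uniformBox d L) := by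
  refine ⟨fun x => ?_⟩
  rw [uniformBox, Measure.smul_apply, measure_singleton, smul_zero]

lemma kolDist_eq_of_measurePreserving {Ω Ω' : Type*} [MeasurableSpace Ω] [MeasurableSpace Ω']
    {P : Measure Ω} {P' : Measure Ω'} {T : Ω → Ω'} (hT : MeasurePreserving T P P') {X : Ω → ℝ}
    {S : Ω' → ℝ} (hS : Measurable S) (hX : X =ᵐ[P] S ∘ T) : kolDist P X = kolDist P' S := by
  have hmean : ∫ ω, X ω ∂P = ∫ ω, S ω ∂P' :=
    (integral_congr_ae hX).trans (integral_comp_of_measurePreserving hT hS.aestronglyMeasurable)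
  have hvar : Var[X; P] = Var[S; P'] := by
    rw [variance_congr hX, ← variance_map hS.aemeasurable hT.aemeasurable, hT.map_eq]
  unfold kolDist
  simp_rw [hmean, hvar]
  refine iSup_congr fun t => congrArg (fun p => |ENNReal.toReal p - stdGaussCDF t|) ?_
  rw [← hT.measure_preimage
    (measurableSet_le ((hS.sub_const _).div_const _) measurable_const).nullMeasurableSet]
  refine measure_congr ?_
  filter_upwards [hX] with ω hω
  change (_ ≤ t) = (_ ≤ t)
  rw [hω, Function.comp_apply]

theorem kolDist_isolCount_eq (hd : 1 ≤ d) (hρ : 0 ≤ ρ) [Fact (0 < sideLen d n)] :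
    kolDist (binppLaw d n) (isolCount d n ρ) =
      kolDist (Measure.pi fun _ : Fin n => torusMeasure d (sideLen d n))
        (isolatedCount (Near ρ)) := by
  have : Nonempty (Fin d) := ⟨⟨0, hd⟩⟩
  refine kolDist_eq_of_measurePreserving
    (measurePreserving_pi _ _ fun _ => measurePreserving_uniformBox)
    (measurable_isolatedCount (measurableSet_near ρ)) ?_
  have hbox : ∀ᵐ ω ∂binppLaw d n, ∀ i, ω i ∈ box d (sideLen d n) := ae_all_iff.mpr fun i =>
    (measurePreserving_eval (fun _ : Fin n => uniformBox d (sideLen d n)) i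
      ).quasiMeasurePreserving.ae ae_uniformBox_mem_box
  filter_upwards [hbox, ae_injective_pi (ι := Fin n) (uniformBox d (sideLen d n))]
    with ω hω hinj using isolCount_eq_isolatedCount hρ hω hinj

end Transfer

section Limits

lemma mul_pow_le_pow_sub_pow {a b : ℝ} (ha : 0 ≤ a) (hab : a ≤ b) (m : ℕ) :
    m * (b - a) * a ^ (m - 1) ≤ b ^ m - a ^ m := by
  have hterm (i) (hi : i ∈ Finset.range m) : a ^ (m - 1) ≤ b ^ i * a ^ (m - 1 - i) := by
    rw [← pow_mul_pow_sub a (Nat.le_sub_one_of_lt (Finset.mem_range.mp hi))]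
    gcongr
  rw [← (Commute.all b a).geom_sum₂_mul, mul_right_comm]
  refine mul_le_mul_of_nonneg_right ?_ (sub_nonneg.mpr hab)
  simpa only [Finset.card_range, nsmul_eq_mul] using Finset.card_nsmul_le_sum _ _ _ hterm

lemma pow_sub_pow_le_mul_pow {a b : ℝ} (ha : 0 ≤ a) (hab : a ≤ b) (m : ℕ) :
    b ^ m - a ^ m ≤ m * (b - a) * b ^ (m - 1) := by
  have hterm (i) (hi : i ∈ Finset.range m) : b ^ i * a ^ (m - 1 - i) ≤ b ^ (m - 1) := by
    have := ha.trans hab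
    rw [← pow_mul_pow_sub b (Nat.le_sub_one_of_lt (Finset.mem_range.mp hi))]
    gcongr
  rw [← (Commute.all b a).geom_sum₂_mul, mul_right_comm]
  refine mul_le_mul_of_nonneg_right ?_ (sub_nonneg.mpr hab)
  simpa only [Finset.card_range, nsmul_eq_mul] using Finset.sum_le_card_nsmul _ _ _ hterm

lemma tendsto_one_sub_inv_natCast : Tendsto (fun n : ℕ => 1 - (n : ℝ)⁻¹) atTop (𝓝 1) := by
  simpa using tendsto_inv_atTop_nhds_zero_nat.const_sub (1 : ℝ)

lemma tendsto_mul_pow_sub_pow {a b : ℕ → ℝ} {A c : ℝ} (ha : ∀ᶠ n in atTop, 0 ≤ a n)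
    (hab : ∀ᶠ n in atTop, a n ≤ b n) (haA : Tendsto (fun n => a n ^ (n - 2)) atTop (𝓝 A))
    (hbA : Tendsto (fun n => b n ^ (n - 2)) atTop (𝓝 A))
    (hc : Tendsto (fun n : ℕ => (n : ℝ) ^ 2 * (b n - a n)) atTop (𝓝 c)) :
    Tendsto (fun n : ℕ => (n : ℝ) * (b n ^ (n - 1) - a n ^ (n - 1))) atTop (𝓝 (c * A)) := by
  have hc' : Tendsto (fun n : ℕ => (n : ℝ) * (((n - 1 : ℕ) : ℝ) * (b n - a n))) atTop (𝓝 c) := by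
    rw [← one_mul c]
    refine (tendsto_one_sub_inv_natCast.mul hc).congr' ?_
    filter_upwards [eventually_ge_atTop 1] with n hn
    have hn' : (n : ℝ) ≠ 0 := by positivity
    rw [Nat.cast_pred hn]
    field_simp
  refine tendsto_of_tendsto_of_tendsto_of_le_of_le' (hc'.mul haA) (hc'.mul hbA) ?_ ?_
  · filter_upwards [ha, hab] with n ha hab
    rw [mul_assoc]
    exact mul_le_mul_of_nonneg_left (mul_pow_le_pow_sub_pow ha hab _) n.cast_nonneg
  · filter_upwards [ha, hab] with n ha hab
    rw [mul_assoc]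
    exact mul_le_mul_of_nonneg_left (pow_sub_pow_le_mul_pow ha hab _) n.cast_nonneg

lemma tendsto_one_sub_div_pow_sub (x : ℝ) (k : ℕ) :
    Tendsto (fun n : ℕ => (1 - x / n) ^ (n - k)) atTop (𝓝 (Real.exp (-x))) := by
  have hbase : Tendsto (fun n : ℕ => 1 - x / n) atTop (𝓝 1) := by
    simpa using (tendsto_const_div_atTop_nhds_zero_nat x).const_sub 1
  have hpow : Tendsto (fun n : ℕ => (1 - x / n) ^ n) atTop (𝓝 (Real.exp (-x))) :=
    (Real.tendsto_one_add_div_pow_exp (-x)).congr fun n => by rw [neg_div, ← sub_eq_add_neg]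
  have hdiv := hpow.div (hbase.pow k) (pow_ne_zero k one_ne_zero)
  rw [one_pow, div_one] at hdiv
  refine hdiv.congr' ?_
  filter_upwards [eventually_ge_atTop k, hbase.eventually_ne one_ne_zero] with n hn hne
  rw [Pi.div_apply, pow_sub₀ _ hne hn, div_eq_mul_inv]

lemma tendsto_mul_one_sub_div_sq_pow_sub (φ : ℝ) :
    Tendsto (fun n : ℕ => (n : ℝ) * (((1 - φ / n) ^ 2) ^ (n - 1) - (1 - 2 * φ / n) ^ (n - 1))) atTop
      (𝓝 (φ ^ 2 * Real.exp (-(2 * φ)))) := by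
  have hdiff (n : ℕ) : (1 - φ / n) ^ 2 - (1 - 2 * φ / n) = (φ / n) ^ 2 := by ring
  refine tendsto_mul_pow_sub_pow ?_ (.of_forall fun n => ?_)
    (tendsto_one_sub_div_pow_sub (2 * φ) 2) ?_ (tendsto_const_nhds.congr' ?_)
  · filter_upwards [tendsto_natCast_atTop_atTop.eventually_ge_atTop (2 * φ)] with n hn
    exact sub_nonneg.mpr (div_le_one_of_le₀ hn n.cast_nonneg)
  · rw [← sub_nonneg, hdiff]; positivity
  · have hsq := (tendsto_one_sub_div_pow_sub φ 2).pow 2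
    rw [← Real.exp_nat_mul, Nat.cast_ofNat, mul_neg] at hsq
    exact hsq.congr fun n => pow_right_comm _ _ _
  · filter_upwards [eventually_ge_atTop 1] with n hn
    have hn' : (n : ℝ) ≠ 0 := by positivity
    rw [hdiff]
    field_simp

/-- The terms of order `n ^ 2` cancel since `(1 - φ / n) ^ 2` and `1 - 2 * φ / n` differ by
`(φ / n) ^ 2` only. -/
lemma tendsto_isolated_variance_div (φ c : ℝ) {A : ℕ → ℝ} {a : ℝ} (hA : Tendsto A atTop (𝓝 a)) :
    Tendsto (fun n : ℕ => (n * (1 - φ / n) ^ (n - 1) + n * (n - 1) *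
        ((n : ℝ)⁻¹ * A n + (1 - c / n) * (1 - 2 * (φ / n)) ^ (n - 2)) -
        (n * (1 - φ / n) ^ (n - 1)) ^ 2) / n) atTop
      (𝓝 (Real.exp (-φ) + a - (1 + c - 2 * φ + φ ^ 2) * Real.exp (-(2 * φ)))) := by
  have hcoef : Tendsto (fun n : ℕ => 1 + c - 2 * φ - c / n) atTop (𝓝 (1 + c - 2 * φ)) := by
    simpa using (tendsto_const_div_atTop_nhds_zero_nat c).const_sub (1 + c - 2 * φ)
  have hlim := (((tendsto_one_sub_div_pow_sub φ 1).add (tendsto_one_sub_inv_natCast.mul hA)).sub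
    (hcoef.mul (tendsto_one_sub_div_pow_sub (2 * φ) 2))).sub (tendsto_mul_one_sub_div_sq_pow_sub φ)
  rw [one_mul, sub_sub, ← add_mul] at hlim
  refine hlim.congr' ?_
  filter_upwards [eventually_ge_atTop 2] with n hn
  have hn' : (n : ℝ) ≠ 0 := by positivity
  have hz : (1 - 2 * φ / n) ^ (n - 1) = (1 - 2 * φ / n) ^ (n - 2) * (1 - 2 * φ / (n : ℝ)) := by
    rw [← pow_succ, show n - 2 + 1 = n - 1 by lia]
  rw [hz, ← mul_div_assoc, pow_right_comm]
  field_simp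
  ring

lemma tendsto_integral_one_sub_div_pow_sub {α : Type*} [MeasurableSpace α] {μ : Measure α}
    [IsFiniteMeasure μ] {f : α → ℝ} (hf : Measurable f) (hf0 : ∀ x, 0 ≤ f x) {M : ℝ}
    (hfM : ∀ x, f x ≤ M) (k : ℕ) :
    Tendsto (fun n : ℕ => ∫ x, (1 - f x / n) ^ (n - k) ∂μ) atTop (𝓝 (∫ x, Real.exp (-f x) ∂μ)) := by
  refine tendsto_integral_filter_of_dominated_convergence (fun _ => 1)
    (.of_forall fun n => ((hf.div_const _).const_sub 1 |>.pow_const _).aestronglyMeasurable) ?_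
    (integrable_const 1) (.of_forall fun x => tendsto_one_sub_div_pow_sub (f x) k)
  filter_upwards [tendsto_natCast_atTop_atTop.eventually_ge_atTop M] with n hn
  refine .of_forall fun x => ?_
  have hle : f x / n ≤ 1 := div_le_one_of_le₀ ((hfM x).trans hn) n.cast_nonneg
  have hnonneg : 0 ≤ f x / n := div_nonneg (hf0 x) n.cast_nonneg
  rw [Real.norm_of_nonneg (pow_nonneg (by linarith) _)]
  exact pow_le_one₀ (by linarith) (by linarith)

end Limits

section BallUnion

open scoped Pointwise

variable {d : ℕ} {a b r ρ : ℝ}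

/-- The volume of the union of two balls of radius `ρ` of `ℝ^d` with centres `0` and `x`; for
`ρ = 1` it is `ω_d(‖x‖)`. -/
def ballUnionVol (ρ : ℝ) (x : EuclideanSpace ℝ (Fin d)) : ℝ :=
  volume.real (closedBall 0 ρ ∪ closedBall x ρ)

lemma volume_real_closedBall_eq_phi (hr : 0 ≤ r) (x : EuclideanSpace ℝ (Fin d)) :
    volume.real (closedBall x r) = phi d r := by
  rw [measureReal_def, Measure.addHaar_closedBall' _ _ hr, ENNReal.toReal_mul,
    ENNReal.toReal_ofReal (pow_nonneg hr _), finrank_euclideanSpace_fin, mul_comm, phi, unitBallVol]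

lemma phi_pos (hr : 0 < r) : 0 < phi d r := by
  rw [← volume_real_closedBall_eq_phi hr.le 0]
  exact ENNReal.toReal_pos (measure_closedBall_pos _ _ hr).ne' measure_closedBall_lt_top.ne

lemma phi_mul (c r : ℝ) : phi d (c * r) = c ^ d * phi d r := by
  rw [phi, phi, mul_pow, mul_left_comm]

lemma ballUnionVol_nonneg (ρ : ℝ) (x : EuclideanSpace ℝ (Fin d)) : 0 ≤ ballUnionVol ρ x :=
  measureReal_nonneg

lemma ballUnionVol_le (hρ : 0 ≤ ρ) (x : EuclideanSpace ℝ (Fin d)) :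
    ballUnionVol ρ x ≤ 2 * phi d ρ := by
  refine (measureReal_union_le _ _).trans_eq ?_
  rw [volume_real_closedBall_eq_phi hρ, volume_real_closedBall_eq_phi hρ, two_mul]

lemma measurable_ballUnionVol (ρ : ℝ) :
    Measurable (ballUnionVol ρ : EuclideanSpace ℝ (Fin d) → ℝ) :=
  measurable_measureReal_closedBall_union ρ

/-- A reflection exchanges `x` and `y`. -/
lemma ballUnionVol_eq_of_norm_eq {x y : EuclideanSpace ℝ (Fin d)} (h : ‖x‖ = ‖y‖) (ρ : ℝ) :
    ballUnionVol ρ x = ballUnionVol ρ y := by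
  let f := (ℝ ∙ (x - y))ᗮ.reflection
  have hfx : f x = y := Submodule.reflection_sub h
  have hpre : f ⁻¹' (closedBall 0 ρ ∪ closedBall y ρ) = closedBall 0 ρ ∪ closedBall x ρ := by
    rw [preimage_union, ← hfx, f.isometry.preimage_closedBall, ← map_zero f,
      f.isometry.preimage_closedBall, map_zero]
  rw [ballUnionVol, ballUnionVol, ← hpre, f.measurePreserving.measureReal_preimage
    (measurableSet_closedBall.union measurableSet_closedBall).nullMeasurableSet]

lemma norm_unitVec (hd : 1 ≤ d) : ‖unitVec d‖ = 1 := by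
  rw [unitVec, dif_pos (show 0 < d from hd), PiLp.norm_single, norm_one]

lemma ballUnionVol_smul (hd : 1 ≤ d) (hρ : 0 < ρ) (x : EuclideanSpace ℝ (Fin d)) :
    ballUnionVol ρ (ρ • x) = ρ ^ d * omegaVol d ‖x‖ := by
  have hset : closedBall 0 ρ ∪ closedBall (ρ • x) ρ = ρ • (closedBall 0 1 ∪ closedBall x 1) := by
    rw [smul_set_union, _root_.smul_closedBall _ _ zero_le_one,
      _root_.smul_closedBall _ _ zero_le_one, smul_zero, Real.norm_of_nonneg hρ.le, mul_one]
  have hnorm : ‖‖x‖ • unitVec d‖ = ‖x‖ := by rw [norm_smul, norm_norm, norm_unitVec hd, mul_one]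
  calc ballUnionVol ρ (ρ • x) = ρ ^ d * ballUnionVol 1 x := by
        rw [ballUnionVol, hset, measureReal_def, Measure.addHaar_smul_of_nonneg _ hρ.le,
          ENNReal.toReal_mul, finrank_euclideanSpace_fin, ENNReal.toReal_ofReal (by positivity)]
        rfl
    _ = ρ ^ d * omegaVol d ‖x‖ := by rw [ballUnionVol_eq_of_norm_eq hnorm.symm]; rfl

lemma volume_real_annulus (ha : 0 ≤ a) (hab : a ≤ b) :
    volume.real (closedBall (0 : EuclideanSpace ℝ (Fin d)) b \ closedBall 0 a) =
      phi d b - phi d a := by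
  rw [measureReal_sdiff (closedBall_subset_closedBall hab) measurableSet_closedBall
    measure_closedBall_lt_top.ne,
    volume_real_closedBall_eq_phi (ha.trans hab), volume_real_closedBall_eq_phi ha]

lemma setIntegral_annulus_fun_norm (hd : 1 ≤ d) (ha : 0 ≤ a) (hab : a ≤ b) (f : ℝ → ℝ) :
    ∫ x in closedBall (0 : EuclideanSpace ℝ (Fin d)) b \ closedBall 0 a, f ‖x‖ =
      d * unitBallVol d * ∫ t in a..b, f t * t ^ (d - 1) := by
  have : Nonempty (Fin d) := ⟨⟨0, hd⟩⟩
  have hball : volume.real (ball (0 : EuclideanSpace ℝ (Fin d)) 1) = unitBallVol d := by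
    rw [unitBallVol, Measure.addHaar_unitClosedBall_eq_addHaar_unitBall, measureReal_def]
  have hind (x : EuclideanSpace ℝ (Fin d)) :
      (closedBall (0 : EuclideanSpace ℝ (Fin d)) b \ closedBall 0 a).indicator (fun x => f ‖x‖) x =
        (Ioc a b).indicator f ‖x‖ := by
    simp [indicator_apply, and_comm]
  rw [← integral_indicator (measurableSet_closedBall.diff measurableSet_closedBall)]
  simp_rw [hind]
  rw [integral_fun_norm_addHaar, finrank_euclideanSpace_fin, hball,
    intervalIntegral.integral_of_le hab, nsmul_eq_mul, smul_eq_mul, mul_assoc]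
  have hsmul (t : ℝ) : t ^ (d - 1) • (Ioc a b).indicator f t =
      (Ioc a b).indicator (fun t => f t * t ^ (d - 1)) t := by
    rw [smul_eq_mul, mul_comm, indicator_mul_left]
  simp_rw [hsmul]
  rw [setIntegral_indicator measurableSet_Ioc,
    inter_eq_right.mpr (Ioc_subset_Ioi_self.trans (Ioi_subset_Ioi ha))]

lemma measurable_omegaVol (d : ℕ) : Measurable (omegaVol d) :=
  (measurable_ballUnionVol 1).comp (measurable_id.smul_const (unitVec d))

lemma intervalIntegrable_exp_neg_mul_omegaVol {c : ℝ} (hc : 0 ≤ c) (a b : ℝ) (m : ℕ) :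
    IntervalIntegrable (fun t => Real.exp (-(c * omegaVol d t)) * t ^ m) volume a b := by
  refine ((continuous_pow m).intervalIntegrable (μ := volume) a b).mono_fun
    ((((measurable_omegaVol d).const_mul c).neg.exp).mul (measurable_id.pow_const m)
      |>.aestronglyMeasurable) (.of_forall fun t => ?_)
  have hnonneg : 0 ≤ omegaVol d t := ENNReal.toReal_nonneg
  simp only [norm_mul, Real.norm_of_nonneg (Real.exp_pos _).le]
  exact mul_le_of_le_one_left (norm_nonneg _)
    (Real.exp_le_one_iff.mpr (neg_nonpos.mpr (mul_nonneg hc hnonneg)))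

theorem setIntegral_annulus_exp_neg_ballUnionVol (hd : 1 ≤ d) (hρ : 0 < ρ) (ha : 0 ≤ a)
    (hab : a ≤ b) :
    ∫ x in closedBall (0 : EuclideanSpace ℝ (Fin d)) (b * ρ) \ closedBall 0 (a * ρ),
      Real.exp (-ballUnionVol ρ x) = ρ ^ d * (Jint b d ρ - Jint a d ρ) := by
  have hann : closedBall (0 : EuclideanSpace ℝ (Fin d)) (b * ρ) \ closedBall 0 (a * ρ) =
      ρ • (closedBall 0 b \ closedBall 0 a) := by
    rw [smul_set_sdiff₀ hρ.ne', _root_.smul_closedBall _ _ (ha.trans hab),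
      _root_.smul_closedBall _ _ ha, smul_zero, Real.norm_of_nonneg hρ.le, mul_comm ρ, mul_comm ρ]
  have hscale := Measure.setIntegral_comp_smul_of_pos volume
    (fun x : EuclideanSpace ℝ (Fin d) => Real.exp (-ballUnionVol ρ x))
    (closedBall 0 b \ closedBall 0 a) hρ
  rw [finrank_euclideanSpace_fin, smul_eq_mul, eq_inv_mul_iff_mul_eq₀ (by positivity)] at hscale
  rw [hann, ← hscale]
  simp_rw [ballUnionVol_smul hd hρ]
  rw [setIntegral_annulus_fun_norm hd ha hab fun t => Real.exp (-(ρ ^ d * omegaVol d t)), Jint,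
    Jint, ← mul_sub, intervalIntegral.integral_interval_sub_left] <;>
  exact intervalIntegrable_exp_neg_mul_omegaVol (by positivity) _ _ _

lemma gS_eq_add_setIntegral (hd : 1 ≤ d) (hρ : 0 < ρ) :
    gS d ρ = Real.exp (-phi d ρ) +
      (∫ x in closedBall (0 : EuclideanSpace ℝ (Fin d)) (2 * ρ) \ closedBall 0 ρ,
        Real.exp (-ballUnionVol ρ x)) -
      (1 + 2 ^ d * phi d ρ - 2 * phi d ρ + phi d ρ ^ 2) * Real.exp (-(2 * phi d ρ)) := by
  have h := setIntegral_annulus_exp_neg_ballUnionVol hd hρ zero_le_one one_le_two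
  rw [one_mul] at h
  rw [h, gS]
  ring

/-- The union of the two balls has volume at most `2 φ`. -/
lemma le_setIntegral_annulus_exp_neg_ballUnionVol (hρ : 0 ≤ ρ) :
    (2 ^ d - 1) * phi d ρ * Real.exp (-(2 * phi d ρ)) ≤
      ∫ x in closedBall (0 : EuclideanSpace ℝ (Fin d)) (2 * ρ) \ closedBall 0 ρ,
        Real.exp (-ballUnionVol ρ x) := by
  have hfin : volume (closedBall (0 : EuclideanSpace ℝ (Fin d)) (2 * ρ) \ closedBall 0 ρ) ≠ ∞ :=
    ((measure_mono sdiff_subset).trans_lt measure_closedBall_lt_top).ne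
  have hint : IntegrableOn (fun x => Real.exp (-ballUnionVol ρ x))
      (closedBall (0 : EuclideanSpace ℝ (Fin d)) (2 * ρ) \ closedBall 0 ρ) :=
    Measure.integrableOn_of_bounded hfin (measurable_ballUnionVol ρ).neg.exp.aestronglyMeasurable
      (M := 1) (.of_forall fun x => by
        rw [Real.norm_of_nonneg (Real.exp_pos _).le, Real.exp_le_one_iff, neg_nonpos]
        exact ballUnionVol_nonneg ρ x)
  have hle := setIntegral_ge_of_const_le_real
    (measurableSet_closedBall.diff measurableSet_closedBall) hfin
    (fun x _ => Real.exp_le_exp.mpr (neg_le_neg (ballUnionVol_le hρ x))) hint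
  rw [volume_real_annulus hρ (by linarith), phi_mul] at hle
  linarith

lemma gS_pos (hd : 1 ≤ d) (hρ : 0 < ρ) : 0 < gS d ρ := by
  have hφ : 0 < phi d ρ := phi_pos hρ
  have hexp : 1 + phi d ρ + phi d ρ ^ 2 / 2 + phi d ρ ^ 3 / 6 ≤ Real.exp (phi d ρ) := by
    have h := Real.sum_le_exp_of_nonneg hφ.le 4
    norm_num [Finset.sum_range_succ, Nat.factorial] at h
    exact h
  have hpos : 0 < Real.exp (phi d ρ) - (1 - phi d ρ + phi d ρ ^ 2) := by
    nlinarith [mul_pos hφ (show 0 < 2 - phi d ρ / 2 + phi d ρ ^ 2 / 6 by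
      nlinarith [sq_nonneg (phi d ρ - 3 / 2)])]
  calc 0 < (Real.exp (phi d ρ) - (1 - phi d ρ + phi d ρ ^ 2)) * Real.exp (-(2 * phi d ρ)) :=
        mul_pos hpos (Real.exp_pos _)
    _ = Real.exp (-phi d ρ) + (2 ^ d - 1) * phi d ρ * Real.exp (-(2 * phi d ρ)) -
          (1 + 2 ^ d * phi d ρ - 2 * phi d ρ + phi d ρ ^ 2) * Real.exp (-(2 * phi d ρ)) := by
        rw [show -phi d ρ = phi d ρ + -(2 * phi d ρ) by ring, Real.exp_add]
        ring
    _ ≤ gS d ρ := by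
        rw [gS_eq_add_setIntegral hd hρ]
        gcongr
        exact le_setIntegral_annulus_exp_neg_ballUnionVol hρ.le

end BallUnion

section LatticeLowerBound

variable {Ω : Type*} {S : Ω → ℝ}

lemma setOf_standardize_le_eq_of_forall_intCast (hS : ∀ ω, ∃ k : ℤ, S ω = k) {m σ t : ℝ}
    (hσ : 0 < σ) (hmt : (⌊m⌋ - m) / σ ≤ t) (htm : t < (⌊m⌋ - m) / σ + σ⁻¹) :
    {ω | (S ω - m) / σ ≤ t} = {ω | (S ω - m) / σ ≤ (⌊m⌋ - m) / σ} := by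
  refine Subset.antisymm (fun ω (hω : (S ω - m) / σ ≤ t) => ?_) fun ω hω => le_trans hω hmt
  obtain ⟨k, hk⟩ := hS ω
  have hlt : (S ω - m) / σ < (⌊m⌋ + 1 - m) / σ := by
    refine (hω.trans_lt htm).trans_eq ?_
    ring
  rw [div_lt_div_iff_of_pos_right hσ, hk, sub_lt_sub_iff_right] at hlt
  have hkm : k ≤ ⌊m⌋ := Int.lt_add_one_iff.mp (by exact_mod_cast hlt)
  change (S ω - m) / σ ≤ (⌊m⌋ - m) / σ
  rw [hk]
  gcongr

variable [MeasurableSpace Ω] {P : Measure Ω}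

lemma abs_measureReal_sub_stdGaussCDF_le_kolDist [IsProbabilityMeasure P] (S : Ω → ℝ) (t : ℝ) :
    |P.real {ω | (S ω - P[S]) / √(Var[S; P]) ≤ t} - stdGaussCDF t| ≤ kolDist P S :=
  le_ciSup (f := fun t => |P.real {ω | (S ω - P[S]) / √(Var[S; P]) ≤ t} - stdGaussCDF t|)
    ⟨1, forall_mem_range.mpr fun t => abs_measureReal_sub_stdGaussCDF_le_one _ t⟩ t

/-- The distribution function of the standardized variable is constant on a half-open interval of
length `σ⁻¹` contained in `[-σ⁻¹, σ⁻¹]`. -/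
theorem inv_mul_gaussianPDFReal_le_two_mul_kolDist [IsProbabilityMeasure P]
    (hS : ∀ ω, ∃ k : ℤ, S ω = k) (hvar : 0 < Var[S; P]) :
    (√(Var[S; P]))⁻¹ * gaussianPDFReal 0 1 (√(Var[S; P]))⁻¹ ≤ 2 * kolDist P S := by
  set σ := √(Var[S; P])
  set m := P[S]
  have hσ : 0 < σ := Real.sqrt_pos.mpr hvar
  set a := (⌊m⌋ - m) / σ with ha
  have ha_nonpos : a ≤ 0 :=
    div_nonpos_of_nonpos_of_nonneg (sub_nonpos.mpr (Int.floor_le m)) hσ.le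
  have ha_ge : -σ⁻¹ ≤ a := by
    rw [ha, neg_le_iff_add_nonneg, inv_eq_one_div, ← add_div]
    exact div_nonneg (by linarith [Int.lt_floor_add_one m]) hσ.le
  have hbound : ∀ b ∈ Ioo a (a + σ⁻¹), (b - a) * gaussianPDFReal 0 1 σ⁻¹ ≤ 2 * kolDist P S := by
    rintro b ⟨hab, hb⟩
    have hgauss := mul_gaussianPDFReal_le_stdGaussCDF_sub hab.le ha_ge
      (show b ≤ σ⁻¹ by linarith)
    have hDb := abs_measureReal_sub_stdGaussCDF_le_kolDist (P := P) S b
    have hDa := abs_measureReal_sub_stdGaussCDF_le_kolDist (P := P) S a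
    rw [setOf_standardize_le_eq_of_forall_intCast hS hσ hab.le hb] at hDb
    linarith [(abs_le.mp hDb).1, (abs_le.mp hDa).2]
  have hlim : Tendsto (fun b => (b - a) * gaussianPDFReal 0 1 σ⁻¹) (𝓝[<] (a + σ⁻¹))
      (𝓝 ((a + σ⁻¹ - a) * gaussianPDFReal 0 1 σ⁻¹)) :=
    ((tendsto_id.sub_const a).mul_const _).mono_left nhdsWithin_le_nhds
  rw [add_sub_cancel_left] at hlim
  exact le_of_tendsto hlim (mem_of_superset
    (Ioo_mem_nhdsLT (lt_add_of_pos_right a (inv_pos.mpr hσ))) hbound)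

end LatticeLowerBound

section TorusAsymptotics

variable {d n : ℕ} {ρ : ℝ}

lemma sideLen_pow (hd : 1 ≤ d) (n : ℕ) : sideLen d n ^ d = n :=
  Real.rpow_inv_natCast_pow n.cast_nonneg (by lia)

lemma tendsto_sideLen_atTop (hd : 1 ≤ d) : Tendsto (sideLen d) atTop atTop :=
  (tendsto_rpow_atTop (inv_pos.mpr (by exact_mod_cast hd))).comp tendsto_natCast_atTop_atTop

/-- The variance of `S` as a function of `n`, valid as soon as the torus of volume `n` is so large
that the balls around two points at distance at most `2ρ` do not wrap around it. -/
def isolatedVariance (d : ℕ) (ρ : ℝ) (n : ℕ) : ℝ :=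
  n * (1 - phi d ρ / n) ^ (n - 1) + n * (n - 1) *
    ((n : ℝ)⁻¹ * (∫ x in closedBall (0 : EuclideanSpace ℝ (Fin d)) (2 * ρ) \ closedBall 0 ρ,
        (1 - ballUnionVol ρ x / n) ^ (n - 2)) +
      (1 - 2 ^ d * phi d ρ / n) * (1 - 2 * (phi d ρ / n)) ^ (n - 2)) -
    (n * (1 - phi d ρ / n) ^ (n - 1)) ^ 2

theorem tendsto_isolatedVariance_div (hd : 1 ≤ d) (hρ : 0 < ρ) :
    Tendsto (fun n : ℕ => isolatedVariance d ρ n / n) atTop (𝓝 (gS d ρ)) := by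
  have : IsFiniteMeasure (volume.restrict
      (closedBall (0 : EuclideanSpace ℝ (Fin d)) (2 * ρ) \ closedBall 0 ρ)) :=
    isFiniteMeasure_restrict.mpr
      ((measure_mono sdiff_subset).trans_lt measure_closedBall_lt_top).ne
  rw [gS_eq_add_setIntegral hd hρ]
  exact tendsto_isolated_variance_div _ _ (tendsto_integral_one_sub_div_pow_sub
    (measurable_ballUnionVol ρ) (ballUnionVol_nonneg ρ) (ballUnionVol_le hρ.le) 2)

lemma eventually_isolatedVariance_pos (hd : 1 ≤ d) (hρ : 0 < ρ) :
    ∀ᶠ n : ℕ in atTop, 0 < isolatedVariance d ρ n := by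
  filter_upwards [(tendsto_isolatedVariance_div hd hρ).eventually_const_lt (gS_pos hd hρ),
    eventually_gt_atTop 0] with n hpos hn
  exact (div_pos_iff_of_pos_right (by exact_mod_cast hn)).mp hpos

lemma tendsto_sqrt_div_sqrt_isolatedVariance (hd : 1 ≤ d) (hρ : 0 < ρ) :
    Tendsto (fun n : ℕ => √n / √(isolatedVariance d ρ n)) atTop (𝓝 (√(gS d ρ))⁻¹) := by
  refine ((tendsto_isolatedVariance_div hd hρ).sqrt.inv₀
    (Real.sqrt_pos.mpr (gS_pos hd hρ)).ne').congr fun n => ?_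
  rw [Real.sqrt_div' _ n.cast_nonneg, inv_div]

lemma torusMeasure_real_closedBall_sideLen [Fact (0 < sideLen d n)] (hd : 1 ≤ d) (hρ : 0 ≤ ρ)
    (hL : 2 * ρ < sideLen d n) (x : FlatTorus d (sideLen d n)) :
    (torusMeasure d (sideLen d n)).real (closedBall x ρ) = phi d ρ / n := by
  rw [measureReal_closedBall_eq, torusMeasure_real_closedBall (by linarith),
    volume_real_closedBall_eq_phi hρ, sideLen_pow hd]

theorem variance_isolatedCount_near_flatTorus [Fact (0 < sideLen d n)] (hd : 1 ≤ d) (hρ : 0 ≤ ρ)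
    (hL : 10 * ρ < sideLen d n) :
    Var[isolatedCount (Near ρ); Measure.pi fun _ : Fin n => torusMeasure d (sideLen d n)] =
      isolatedVariance d ρ n := by
  have hball := torusMeasure_real_closedBall_sideLen hd hρ (by linarith)
    (0 : FlatTorus d (sideLen d n))
  have hball2 := torusMeasure_real_closedBall_sideLen hd (show 0 ≤ 2 * ρ by linarith)
    (by linarith) (0 : FlatTorus d (sideLen d n))
  rw [phi_mul] at hball2
  have hannulus : ∫ a in closedBall 0 (2 * ρ) \ closedBall 0 ρ,
        (1 - (torusMeasure d (sideLen d n)).real (closedBall 0 ρ ∪ closedBall a ρ)) ^ (n - 2)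
          ∂torusMeasure d (sideLen d n) =
      (n : ℝ)⁻¹ * ∫ x in closedBall (0 : EuclideanSpace ℝ (Fin d)) (2 * ρ) \ closedBall 0 ρ,
        (1 - ballUnionVol ρ x / n) ^ (n - 2) := by
    rw [setIntegral_torusMeasure_annulus (by linarith)
      (((measurable_measureReal_closedBall_union ρ).const_sub 1).pow_const _), sideLen_pow hd]
    refine congrArg _ (setIntegral_congr_fun
      (measurableSet_closedBall.diff measurableSet_closedBall) fun x hx => ?_)
    simp only [torusMeasure_real_closedBall_union hL hρ (mem_closedBall_zero_iff.mp hx.1),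
      sideLen_pow hd, ballUnionVol]
  rw [variance_isolatedCount_near hρ, Fintype.card_fin, hannulus, hball, hball2]
  rfl

lemma exists_int_isolatedCount_eq {ι E : Type*} [Fintype ι] (R : E → E → Prop) (X : ι → E) :
    ∃ k : ℤ, isolatedCount R X = k := by
  refine ⟨∑ k, (isolatedSet R k).indicator 1 X, ?_⟩
  simp [isolatedCount, indicator_apply]

theorem inv_mul_gaussianPDFReal_le_two_mul_kolDist_isolCount (hd : 1 ≤ d) (hρ : 0 ≤ ρ)
    (hL : 10 * ρ < sideLen d n) (hV : 0 < isolatedVariance d ρ n) :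
    (√(isolatedVariance d ρ n))⁻¹ * gaussianPDFReal 0 1 (√(isolatedVariance d ρ n))⁻¹ ≤
      2 * kolDist (binppLaw d n) (isolCount d n ρ) := by
  have : Fact (0 < sideLen d n) := ⟨by linarith⟩
  have hvar := variance_isolatedCount_near_flatTorus (n := n) hd hρ hL
  rw [kolDist_isolCount_eq hd hρ, ← hvar]
  exact inv_mul_gaussianPDFReal_le_two_mul_kolDist (exists_int_isolatedCount_eq _) (hvar ▸ hV)

lemma kolDist_isolCount_le (hd : 1 ≤ d) (hρ : 0 < ρ) (hL : 10 * ρ < sideLen d n)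
    (hV : 0 < isolatedVariance d ρ n) {δ : ℝ}
    (hδ : δ = (1 + (5 ^ d : ℕ)) / √(isolatedVariance d ρ n)) :
    kolDist (binppLaw d n) (isolCount d n ρ) ≤
      2 * (2 * √(n * δ ^ 4 * (1 + 8 * phi d (2 * ρ) + (8 * phi d (2 * ρ)) ^ 2)) +
        12 * (n * δ ^ 3) + δ) := by
  have : Fact (0 < sideLen d n) := ⟨by linarith⟩
  have : NeZero n := ⟨by rintro rfl; simp [isolatedVariance] at hV⟩
  have hq (x : FlatTorus d (sideLen d n)) :
      (torusMeasure d (sideLen d n)).real {y | Near (ρ + ρ) x y} ≤ phi d (2 * ρ) / n := by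
    rw [← torusMeasure_real_closedBall_sideLen hd (by linarith) (by linarith) x, ← two_mul]
    exact measureReal_mono fun y hy => hy.symm
  have hvar := variance_isolatedCount_near_flatTorus hd hρ.le hL
  rw [kolDist_isolCount_eq hd hρ.le]
  refine ciSup_le fun t => ?_
  have hBE := abs_measureReal_standardize_sub_stdGaussCDF_le
    (measurable_isolatedCount (measurableSet_near ρ))
    (memLp_isolatedCount (measurableSet_near ρ) 2)
    (Real.sqrt_pos.mpr hV) (hvar.trans (Real.sq_sqrt hV.le).symm)
    (by positivity)
    (hasBoundedDifferences_isolatedCount (near_self hρ.le) (isPackingBound_near_flatTorus hρ))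
    (hasLocalDifferences_isolatedCount (near_self hρ.le) (fun _ _ => Near.symm)
      fun _ _ _ => Near.trans)
    (measurableSet_near (ρ + ρ)) hq t
  rw [mul_assoc 8 (n : ℝ), mul_div_cancel₀ _ (NeZero.ne (n : ℝ)), ← hδ] at hBE
  rw [hvar]
  exact hBE

lemma isBoundedUnder_sqrt_mul_kolDist_isolCount (hd : 1 ≤ d) (hρ : 0 < ρ) :
    IsBoundedUnder (· ≤ ·) atTop
      fun n : ℕ => √n * kolDist (binppLaw d n) (isolCount d n ρ) := by
  set c : ℝ := 1 + (5 ^ d : ℕ)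
  set K : ℝ := 1 + 8 * phi d (2 * ρ) + (8 * phi d (2 * ρ)) ^ 2
  have hlim := (tendsto_sqrt_div_sqrt_isolatedVariance hd hρ).const_mul c
  refine (((((hlim.pow 2).mul_const √K).const_mul 2).add ((hlim.pow 3).const_mul 12)).add
    hlim).const_mul 2 |>.isBoundedUnder_le.mono_le ?_
  filter_upwards [eventually_isolatedVariance_pos hd hρ,
    (tendsto_sideLen_atTop hd).eventually_gt_atTop (10 * ρ)] with n hV hL
  set δ : ℝ := c / √(isolatedVariance d ρ n) with hδ
  have hsqrt : √(n * δ ^ 4 * K) = √n * δ ^ 2 * √K := by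
    rw [Real.sqrt_mul (by positivity), Real.sqrt_mul n.cast_nonneg,
      show δ ^ 4 = (δ ^ 2) ^ 2 by ring, Real.sqrt_sq (sq_nonneg δ)]
  have hscale : c * (√n / √(isolatedVariance d ρ n)) = √n * δ := by rw [hδ]; ring
  rw [hscale]
  calc √n * kolDist (binppLaw d n) (isolCount d n ρ)
    _ ≤ √n * (2 * (2 * √(n * δ ^ 4 * K) + 12 * (n * δ ^ 3) + δ)) := by
        gcongr
        exact kolDist_isolCount_le hd hρ hL hV hδ
    _ = √n * (2 * (2 * (√n * δ ^ 2 * √K) + 12 * (√n ^ 2 * δ ^ 3) + δ)) := by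
        rw [hsqrt, Real.sq_sqrt n.cast_nonneg]
    _ = _ := by ring

theorem tendsto_sqrt_mul_gaussianPDFReal_isolatedVariance (hd : 1 ≤ d) (hρ : 0 < ρ) :
    Tendsto (fun n : ℕ => √n * ((√(isolatedVariance d ρ n))⁻¹ *
        gaussianPDFReal 0 1 (√(isolatedVariance d ρ n))⁻¹ / 2)) atTop
      (𝓝 ((8 * Real.pi * gS d ρ) ^ (-(1 : ℝ) / 2))) := by
  have hg := gS_pos hd hρ
  have hratio := tendsto_sqrt_div_sqrt_isolatedVariance hd hρ
  have hinv : Tendsto (fun n : ℕ => (√(isolatedVariance d ρ n))⁻¹) atTop (𝓝 0) := by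
    have hlim := hratio.mul
      (Real.tendsto_sqrt_atTop.comp tendsto_natCast_atTop_atTop).inv_tendsto_atTop
    rw [mul_zero] at hlim
    refine hlim.congr' ?_
    filter_upwards [eventually_gt_atTop 0] with n hn
    have hsqrt : √(n : ℝ) ≠ 0 := (Real.sqrt_pos.mpr (by exact_mod_cast hn)).ne'
    simp only [Pi.inv_apply, Function.comp_apply]
    field_simp
  have hlim := hratio.mul ((((continuous_gaussianPDFReal 0 1).tendsto 0).comp hinv).div_const 2)
  have hval : (√(gS d ρ))⁻¹ * (gaussianPDFReal 0 1 0 / 2) =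
      (8 * Real.pi * gS d ρ) ^ (-(1 : ℝ) / 2) := by
    rw [gaussianPDFReal_zero_one, neg_div (2 : ℝ) 1, Real.rpow_neg (by positivity),
      ← Real.sqrt_eq_rpow, show 8 * Real.pi * gS d ρ = 2 * Real.pi * gS d ρ * 2 ^ 2 by ring,
      Real.sqrt_mul (by positivity) (2 ^ 2), Real.sqrt_mul (by positivity) (gS d ρ),
      Real.sqrt_sq zero_le_two]
    simp only [ne_eq, OfNat.ofNat_ne_zero, not_false_eq_true, zero_pow, neg_zero, zero_div,
      Real.exp_zero, mul_one, mul_inv]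
    ring
  rw [hval] at hlim
  refine hlim.congr fun n => ?_
  simp only [Function.comp_apply]
  ring

end TorusAsymptotics

/-- (3.7) of Theorem 2.3: asymptotic lower bound on `n^{1/2} D_S`. -/
theorem liminf_kolDist_isolCount (d : ℕ) (hd : 1 ≤ d) (ρ : ℝ) (hρ : 0 < ρ) :
    (8 * Real.pi * gS d ρ) ^ (-(1 : ℝ) / 2) ≤
      liminf (fun n : ℕ => Real.sqrt n * kolDist (binppLaw d n) (isolCount d n ρ)) atTop := by
  have hlim := tendsto_sqrt_mul_gaussianPDFReal_isolatedVariance hd hρ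
  rw [← hlim.liminf_eq]
  refine liminf_le_liminf ?_ hlim.isBoundedUnder_ge
    (isBoundedUnder_sqrt_mul_kolDist_isolCount hd hρ).isCoboundedUnder_ge
  filter_upwards [eventually_isolatedVariance_pos hd hρ,
    (tendsto_sideLen_atTop hd).eventually_gt_atTop (10 * ρ)] with n hV hL
  have hlower := inv_mul_gaussianPDFReal_le_two_mul_kolDist_isolCount hd hρ.le hL hV
  gcongr
  linarith

end
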